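/- arXiv:2407.04817 — 4 statements merged into one kernel-verified Lean document; each statement's English description precedes it below -/
import Mathlib

section
/- Let (Q,I) be a gentle bound quiver. Then every vertex of Q is the center of exactly two split permitted threads. -/
set_option autoImplicit false

attribute [local instance] Classical.propDecidable

/-- A bound-quiver datum: a quiver (source and target maps on a set of arrows) together
with a set of length-two relations; `rel a b` means that the length-two path `ab`
(composable, i.e. `src a = tgt b`; paths are written from right to left) lies in the
generating set of relations of the ideal `I`. -/
structure BQuiv (V A : Type) where
  src : A → V
  tgt : A → V
  rel : A → A → Prop

namespace BQuiv

variable {V A : Type}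

/-- `l` is (the list of arrows of) a path of the quiver, written from right to left:
`l = [a₁, a₂, …, a_ℓ]` represents `a₁a₂⋯a_ℓ` and we ask `src aₜ = tgt aₜ₊₁`. -/
def PathChain (Q : BQuiv V A) (l : List A) : Prop :=
  l.Chain' (fun a b => Q.src a = Q.tgt b)

/-- The degree of a vertex: the number of outgoing plus the number of incoming arrows. -/
noncomputable def deg (Q : BQuiv V A) (v : V) : ℕ :=
  Nat.card {a : A // Q.src a = v} + Nat.card {a : A // Q.tgt a = v}

/-- `(Q, I)` is a gentle bound quiver. -/
structure IsGentle (Q : BQuiv V A) : Prop where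
  /-- relations are composable length-two paths -/
  rel_comp : ∀ a b, Q.rel a b → Q.src a = Q.tgt b
  /-- at most two outgoing arrows at every vertex -/
  out_le : ∀ v, Nat.card {a : A // Q.src a = v} ≤ 2
  /-- at most two incoming arrows at every vertex -/
  in_le : ∀ v, Nat.card {a : A // Q.tgt a = v} ≤ 2
  /-- for every arrow `b` there is at most one arrow `a` with `ab ∉ I` -/
  unique_nonrel_post : ∀ b a a', Q.src a = Q.tgt b → Q.src a' = Q.tgt b →
    ¬ Q.rel a b → ¬ Q.rel a' b → a = a'
  /-- for every arrow `b` there is at most one arrow `c` with `bc ∉ I` -/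
  unique_nonrel_pre : ∀ b c c', Q.src b = Q.tgt c → Q.src b = Q.tgt c' →
    ¬ Q.rel b c → ¬ Q.rel b c' → c = c'
  /-- for every arrow `b` there is at most one arrow `a` with `ab ∈ I` -/
  unique_rel_post : ∀ b a a', Q.rel a b → Q.rel a' b → a = a'
  /-- for every arrow `b` there is at most one arrow `c` with `bc ∈ I` -/
  unique_rel_pre : ∀ b c c', Q.rel b c → Q.rel b c' → c = c'
  /-- admissibility: there is `m ≥ 2` such that every path of length `m` contains a
  length-two subpath lying in the relation set -/
  admissible : ∃ m, 2 ≤ m ∧ ∀ l : List A, l.length = m → Q.PathChain l →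
    ¬ l.Chain' (fun a b => ¬ Q.rel a b)
  /-- the quiver is connected -/
  connected : ∀ u v : V, Relation.ReflTransGen
    (fun x y => ∃ a, (Q.src a = x ∧ Q.tgt a = y) ∨ (Q.src a = y ∧ Q.tgt a = x)) u v
  /-- the quiver has at least one arrow -/
  has_arrow : Nonempty A

/-- A path of the quiver `Q`, with a base (source) vertex so that trivial paths make
sense.  The arrows are written from right to left. -/
structure Path (Q : BQuiv V A) where
  base : V
  arrows : List A
  chain : arrows.Chain' (fun a b => Q.src a = Q.tgt b)
  base_eq : ∀ a, arrows.getLast? = some a → Q.src a = base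

variable {Q : BQuiv V A}

/-- The source vertex of a path. -/
def Path.srcV (p : Path Q) : V := p.base

/-- The target vertex of a path. -/
def Path.tgtV (p : Path Q) : V := p.arrows.head?.elim p.base Q.tgt

/-- The vertex of a path sitting between its first `n` arrows and the rest:
the center of the corresponding split of the path. -/
def Path.vertexAt (p : Path Q) (n : ℕ) : V :=
  (p.arrows.drop n).head?.elim p.base Q.tgt

/-- A path is permitted if none of its length-two subpaths is a relation. -/
def Path.Permitted (p : Path Q) : Prop :=
  p.arrows.Chain' (fun a b => ¬ Q.rel a b)

/-- A path is forbidden if each of its length-two subpaths is a relation. -/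
def Path.Forbidden (p : Path Q) : Prop :=
  p.arrows.Chain' (fun a b => Q.rel a b)

/-- Permitted threads: maximal non-trivial permitted paths, together with the trivial
paths `e_i` at vertices `i` with `deg i = 1`, or `deg i = 2` with the two arrows
`α, β` at `i` satisfying `src α = tgt β = i` and `αβ ∉ I`. -/
def IsPermThread (Q : BQuiv V A) (p : Path Q) : Prop :=
  (p.arrows ≠ [] ∧ p.Permitted ∧
    (∀ a b, p.arrows.head? = some b → Q.src a = Q.tgt b → Q.rel a b) ∧
    (∀ a c, p.arrows.getLast? = some a → Q.src a = Q.tgt c → Q.rel a c)) ∨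
  (p.arrows = [] ∧ (Q.deg p.base = 1 ∨ (Q.deg p.base = 2 ∧
    ∃ α β, Q.src α = p.base ∧ Q.tgt β = p.base ∧ ¬ Q.rel α β)))

/-- Forbidden threads: maximal non-trivial forbidden paths, together with the trivial
paths `e_i` at vertices `i` with `deg i = 1`, or `deg i = 2` with the two arrows
`α, β` at `i` satisfying `src α = tgt β = i` and `αβ ∈ I`. -/
def IsForbThread (Q : BQuiv V A) (p : Path Q) : Prop :=
  (p.arrows ≠ [] ∧ p.Forbidden ∧
    (∀ a b, p.arrows.head? = some b → Q.src a = Q.tgt b → ¬ Q.rel a b) ∧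
    (∀ a c, p.arrows.getLast? = some a → Q.src a = Q.tgt c → ¬ Q.rel a c)) ∨
  (p.arrows = [] ∧ (Q.deg p.base = 1 ∨ (Q.deg p.base = 2 ∧
    ∃ α β, Q.src α = p.base ∧ Q.tgt β = p.base ∧ Q.rel α β)))

end BQuiv

open BQuiv

/-!
A split of a permitted thread at `v` falls into two halves that meet at `v`.  Gentleness makes the
permitted continuation of an arrow unique, and admissibility makes it stop, so each half is
determined by its arrow at `v`.  Splits at `v` therefore correspond to the ways of pairing the
arrows out of `v` with the arrows into `v` along non-relations, unpaired arrows being left alone,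
plus one more for a trivial thread.  If two arrows leave `v`, each incoming arrow is paired with
exactly one of them, so there is one split for each outgoing arrow; dually if two arrows enter `v`.
With at most one arrow each way, the trivial thread accounts exactly for the missing split.
-/

section TerminalChain

variable {α : Type*} {R : α → α → Prop}

/-- A chain for `R` that cannot be continued after its last element.  Each half of a split permitted
thread, listed from the center outwards, is such a chain. -/
def IsTerminalChain (R : α → α → Prop) (l : List α) : Prop :=
  l.IsChain R ∧ ∀ a ∈ l.getLast?, ∀ b, ¬ R a b

theorem isTerminalChain_nil : IsTerminalChain R [] := by
  simp [IsTerminalChain]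

theorem isTerminalChain_singleton {a : α} : IsTerminalChain R [a] ↔ ∀ b, ¬ R a b := by
  simp [IsTerminalChain]

theorem isTerminalChain_cons_cons {a b : α} {l : List α} :
    IsTerminalChain R (a :: b :: l) ↔ R a b ∧ IsTerminalChain R (b :: l) := by
  simp only [IsTerminalChain, List.isChain_cons_cons, List.getLast?_cons_cons, and_assoc]

theorem IsTerminalChain.eq_of_head?_eq (hR : Relator.RightUnique R) :
    ∀ {l l' : List α}, IsTerminalChain R l → IsTerminalChain R l' → l.head? = l'.head? → l = l'
  | [], l', _, _, h => (List.head?_eq_none_iff.1 h.symm).symm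
  | _ :: _, [], _, _, h => by simp at h
  | a :: l, a' :: l', hl, hl', h => by
    obtain rfl : a = a' := by simpa using h
    match l, l' with
    | [], [] => rfl
    | [], b :: _ =>
      exact absurd (isTerminalChain_cons_cons.1 hl').1 (isTerminalChain_singleton.1 hl b)
    | b :: _, [] =>
      exact absurd (isTerminalChain_cons_cons.1 hl).1 (isTerminalChain_singleton.1 hl' b)
    | b :: l, b' :: l' =>
      rw [isTerminalChain_cons_cons] at hl hl'
      obtain rfl : b = b' := hR hl.1 hl'.1
      rw [hl.2.eq_of_head?_eq hR hl'.2 rfl]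

theorem exists_isTerminalChain_cons (hR : WellFounded (flip R)) (a : α) :
    ∃ l, IsTerminalChain R (a :: l) := by
  induction a using hR.induction with
  | _ a ih =>
    by_cases h : ∃ b, R a b
    · obtain ⟨b, hab⟩ := h
      obtain ⟨l, hl⟩ := ih b hab
      exact ⟨b :: l, isTerminalChain_cons_cons.2 ⟨hab, hl⟩⟩
    · exact ⟨[], isTerminalChain_singleton.2 (not_exists.1 h)⟩

theorem bijOn_head?_isTerminalChain (hR : Relator.RightUnique R) (hwf : WellFounded (flip R)) :
    Set.BijOn List.head? {l | IsTerminalChain R l} Set.univ := by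
  refine ⟨Set.mapsTo_univ _ _, fun l hl l' hl' => hl.eq_of_head?_eq hR hl', ?_⟩
  rintro (_ | a) -
  · exact ⟨[], isTerminalChain_nil, rfl⟩
  · obtain ⟨l, hl⟩ := exists_isTerminalChain_cons hwf a
    exact ⟨a :: l, hl, rfl⟩

theorem wellFounded_flip_of_forall_not_isChain {m : ℕ}
    (h : ∀ l : List α, l.length = m → ¬ l.IsChain R) : WellFounded (flip R) := by
  refine wellFounded_iff_isEmpty_descending_chain.2 ⟨fun ⟨f, hf⟩ => ?_⟩
  refine h (List.ofFn fun i : Fin m => f i) List.length_ofFn ?_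
  exact List.isChain_ofFn.2 fun i _ => hf i

end TerminalChain

section Junction

variable {α β : Type*} {r : α → β → Prop} {s : Set α} {t : Set β} {T : Prop}

/-- What the arrows adjacent to a cut of a maximal `r`-chain look like: the two are related, or, at
an end of the chain, the one that is there cannot be continued across the cut. -/
def IsJunction (r : α → β → Prop) : Option α → Option β → Prop
  | some a, some b => r a b
  | some a, none => ∀ b, ¬ r a b
  | none, some b => ∀ a, ¬ r a b
  | none, none => True

theorem isJunction_flip {x : Option α} {y : Option β} :
    IsJunction (flip r) y x ↔ IsJunction r x y := by
  cases x <;> cases y <;> rfl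

theorem IsJunction.right_unique (hr : Relator.RightUnique r) {a : α} :
    ∀ {y y' : Option β}, IsJunction r (some a) y → IsJunction r (some a) y' → y = y'
  | none, none, _, _ => rfl
  | none, some b, h, h' => absurd h' (h b)
  | some b, none, h, h' => absurd h (h' b)
  | some _, some _, h, h' => congrArg some (hr h h')

theorem IsJunction.exists_right (r : α → β → Prop) (a : α) : ∃ y, IsJunction r (some a) y := by
  by_cases h : ∃ b, r a b
  · exact h.imp' some fun _ => id
  · exact ⟨none, not_exists.1 h⟩

/-- A chain for `R` that cannot be continued at either end. -/
def IsMaximalChain (R : α → α → Prop) (l : List α) : Prop :=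
  l.IsChain R ∧ (∀ a ∈ l.head?, ∀ b, ¬ R b a) ∧ ∀ a ∈ l.getLast?, ∀ b, ¬ R a b

theorem isMaximalChain_reverse_append_iff {R : α → α → Prop} {l w : List α} :
    IsMaximalChain R (l.reverse ++ w) ↔
      IsTerminalChain (flip R) l ∧ IsTerminalChain R w ∧ IsJunction R l.head? w.head? := by
  have isTerminalChain_flip : IsTerminalChain (flip R) l ↔
      l.reverse.IsChain R ∧ ∀ a ∈ l.getLast?, ∀ b, ¬ R b a := by
    rw [List.isChain_reverse]
    rfl
  rw [isTerminalChain_flip, IsMaximalChain, List.isChain_append, List.head?_append,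
    List.getLast?_append, List.head?_reverse, List.getLast?_reverse, IsTerminalChain]
  rcases l.eq_nil_or_concat' with rfl | ⟨l, c, rfl⟩ <;>
    rcases w.eq_nil_or_concat' with rfl | ⟨w, d, rfl⟩ <;>
    simp [IsJunction, and_assoc, and_left_comm, and_comm]

/-- The junctions between `s` and `t`, where the empty one is admitted exactly when `T` holds.
For the arrows `s` out of a vertex and `t` into it, these are the possible local shapes at that
vertex of a split permitted thread. -/
def junctions (r : α → β → Prop) (s : Set α) (t : Set β) (T : Prop) :
    Set (Option α × Option β) :=
  {z | IsJunction r z.1 z.2 ∧ (∀ a ∈ z.1, a ∈ s) ∧ (∀ b ∈ z.2, b ∈ t) ∧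
    (z.1 = none → z.2 = none → T)}

theorem ncard_junctions_flip : (junctions (flip r) t s T).ncard = (junctions r s t T).ncard := by
  refine (Set.BijOn.ncard_eq (f := Prod.swap) ⟨?_, Prod.swap_injective.injOn, ?_⟩)
  · rintro ⟨y, x⟩ ⟨hr, hy, hx, hT⟩
    exact ⟨isJunction_flip.1 hr, hx, hy, fun h h' => hT h' h⟩
  · rintro ⟨x, y⟩ ⟨hr, hx, hy, hT⟩
    exact ⟨(y, x), ⟨isJunction_flip.2 hr, hy, hx, fun h h' => hT h' h⟩, rfl⟩

theorem ncard_junctions_eq_left (hr : Relator.RightUnique r) (hst : ∀ a b, r a b → (a ∈ s ↔ b ∈ t))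
    (ht : ∀ b ∈ t, ∃ a, r a b) (hT : ¬ T) : (junctions r s t T).ncard = s.ncard := by
  have fst_mem : ∀ z ∈ junctions r s t T, ∃ a ∈ s, some a = z.1 := by
    rintro ⟨_ | a, _ | b⟩ ⟨h, ha, hb, hnone⟩
    · exact absurd (hnone rfl rfl) hT
    · obtain ⟨a, hab⟩ := ht b (hb b rfl)
      exact absurd hab (h a)
    all_goals exact ⟨a, ha a rfl, rfl⟩
  rw [← Set.ncard_image_of_injective s (Option.some_injective α)]
  refine Set.BijOn.ncard_eq (f := Prod.fst) ⟨fst_mem, ?_, ?_⟩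
  · rintro ⟨x, y⟩ hz ⟨_, y'⟩ hz' rfl
    obtain ⟨a, -, rfl⟩ := fst_mem _ hz
    exact congrArg (some a, ·) (hz.1.right_unique hr hz'.1)
  · rintro _ ⟨a, ha, rfl⟩
    obtain ⟨y, hy⟩ := IsJunction.exists_right r a
    refine ⟨(some a, y), ⟨hy, ?_, ?_, nofun⟩, rfl⟩
    · rintro _ ⟨⟩
      exact ha
    · rintro b ⟨⟩
      exact (hst a b hy).1 ha

theorem ncard_junctions_eq_right (hr : Relator.LeftUnique r)
    (hst : ∀ a b, r a b → (a ∈ s ↔ b ∈ t)) (hs : ∀ a ∈ s, ∃ b, r a b) (hT : ¬ T) :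
    (junctions r s t T).ncard = t.ncard := by
  rw [← ncard_junctions_flip]
  exact ncard_junctions_eq_left hr.flip (fun b a h => (hst a b h).symm) hs hT

theorem junctions_singleton_empty {a : α} (ha : ∀ b, ¬ r a b) (hT : T) :
    junctions r {a} ∅ T = {(none, none), (some a, none)} := by
  ext ⟨_ | x, _ | y⟩ <;> simp +contextual [junctions, IsJunction, ha, hT]

theorem junctions_singleton_singleton_of_rel {a : α} {b : β} (hab : r a b) (hT : T) :
    junctions r {a} {b} T = {(none, none), (some a, some b)} := by
  ext ⟨_ | x, _ | y⟩ <;>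
    simp only [junctions, IsJunction, Set.mem_ofPred_eq, Option.mem_some_iff, forall_eq'] <;> grind

theorem junctions_singleton_singleton_of_forall_not {a : α} {b : β} (ha : ∀ b', ¬ r a b')
    (hb : ∀ a', ¬ r a' b) (hT : ¬ T) :
    junctions r {a} {b} T = {(some a, none), (none, some b)} := by
  ext ⟨_ | x, _ | y⟩ <;>
    simp only [junctions, IsJunction, Set.mem_ofPred_eq, Option.mem_some_iff, forall_eq'] <;> grind

end Junction

namespace BQuiv

variable {V A : Type} {Q : BQuiv V A} {v : V}

/-- The composite `ab` of two arrows is a permitted path of length two. -/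
def PermComp (Q : BQuiv V A) (a b : A) : Prop :=
  Q.src a = Q.tgt b ∧ ¬ Q.rel a b

theorem isChain_permComp_iff {l : List A} :
    l.IsChain Q.PermComp ↔ Q.PathChain l ∧ l.IsChain fun a b => ¬ Q.rel a b := by
  change _ ↔ (l.IsChain fun a b => Q.src a = Q.tgt b) ∧ _
  simp only [List.isChain_iff_getElem, PermComp, forall_and]

/-- The arrows starting at `v`. -/
def outgoing (Q : BQuiv V A) (v : V) : Set A :=
  {a | Q.src a = v}

/-- The arrows ending at `v`. -/
def incoming (Q : BQuiv V A) (v : V) : Set A :=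
  {a | Q.tgt a = v}

theorem deg_eq_ncard_add_ncard : Q.deg v = (Q.outgoing v).ncard + (Q.incoming v).ncard :=
  rfl

theorem PermComp.mem_outgoing_iff {a b : A} (h : Q.PermComp a b) :
    a ∈ Q.outgoing v ↔ b ∈ Q.incoming v :=
  Eq.congr_left h.1

/-- The condition under which the trivial path at `v` is a permitted thread. -/
def HasTrivialThread (Q : BQuiv V A) (v : V) : Prop :=
  Q.deg v = 1 ∨ Q.deg v = 2 ∧ ∃ a b, Q.src a = v ∧ Q.tgt b = v ∧ ¬ Q.rel a b

/-- The possible shapes at `v` of a split permitted thread: the arrow out of `v` and the arrow into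
`v` next to the cut, as far as they exist. -/
def localSplits (Q : BQuiv V A) (v : V) : Set (Option A × Option A) :=
  junctions Q.PermComp (Q.outgoing v) (Q.incoming v) (Q.HasTrivialThread v)

namespace IsGentle

theorem rightUnique_permComp (hQ : Q.IsGentle) : Relator.RightUnique Q.PermComp :=
  fun a b c h h' => hQ.unique_nonrel_pre a b c h.1 h'.1 h.2 h'.2

theorem leftUnique_permComp (hQ : Q.IsGentle) : Relator.LeftUnique Q.PermComp :=
  fun a b c h h' => hQ.unique_nonrel_post c a b h.1 h'.1 h.2 h'.2

theorem exists_permComp_of_two_outgoing (hQ : Q.IsGentle) (hv : (Q.outgoing v).ncard = 2) {b : A}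
    (hb : b ∈ Q.incoming v) : ∃ a, Q.PermComp a b := by
  obtain ⟨a, a', hne, hout⟩ := Set.ncard_eq_two.1 hv
  have rel_of_mem (h : ∀ c, ¬ Q.PermComp c b) : ∀ c ∈ Q.outgoing v, Q.rel c b :=
    fun c hc => not_not.1 fun hrel => h c ⟨hc.trans hb.symm, hrel⟩
  by_contra! h
  exact hne (hQ.unique_rel_post b a a' (rel_of_mem h a (by simp [hout]))
    (rel_of_mem h a' (by simp [hout])))

theorem exists_permComp_of_two_incoming (hQ : Q.IsGentle) (hv : (Q.incoming v).ncard = 2) {a : A}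
    (ha : a ∈ Q.outgoing v) : ∃ b, Q.PermComp a b := by
  obtain ⟨b, b', hne, hin⟩ := Set.ncard_eq_two.1 hv
  have rel_of_mem (h : ∀ c, ¬ Q.PermComp a c) : ∀ c ∈ Q.incoming v, Q.rel a c :=
    fun c hc => not_not.1 fun hrel => h c ⟨ha.trans hc.symm, hrel⟩
  by_contra! h
  exact hne (hQ.unique_rel_pre a b b' (rel_of_mem h b (by simp [hin]))
    (rel_of_mem h b' (by simp [hin])))

theorem wellFounded_flip_permComp (hQ : Q.IsGentle) : WellFounded (flip Q.PermComp) := by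
  obtain ⟨m, -, hm⟩ := hQ.admissible
  refine wellFounded_flip_of_forall_not_isChain (m := m) fun l hl hchain => ?_
  rw [isChain_permComp_iff] at hchain
  exact hm l hl hchain.1 hchain.2

theorem wellFounded_permComp (hQ : Q.IsGentle) : WellFounded Q.PermComp := by
  obtain ⟨m, -, hm⟩ := hQ.admissible
  refine wellFounded_flip_of_forall_not_isChain (R := flip Q.PermComp) (m := m)
    fun l hl hchain => ?_
  have hchain' : l.reverse.IsChain Q.PermComp := List.isChain_reverse.2 hchain
  rw [isChain_permComp_iff] at hchain'
  exact hm l.reverse (by simpa) hchain'.1 hchain'.2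

theorem exists_mem_outgoing_or_mem_incoming (hQ : Q.IsGentle) (v : V) :
    ∃ a, a ∈ Q.outgoing v ∨ a ∈ Q.incoming v := by
  obtain ⟨a⟩ := hQ.has_arrow
  rcases (hQ.connected v (Q.src a)).cases_head with rfl | ⟨_, ⟨b, hb⟩, -⟩
  · exact ⟨a, .inl rfl⟩
  · exact ⟨b, hb.imp And.left And.right⟩

end IsGentle

theorem not_hasTrivialThread_of_two_outgoing (hin : (Q.incoming v).Finite)
    (hv : (Q.outgoing v).ncard = 2) : ¬ Q.HasTrivialThread v := by
  rintro (hdeg | ⟨hdeg, _, b, -, hb, -⟩) <;> rw [deg_eq_ncard_add_ncard] at hdeg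
  · lia
  · have : 0 < (Q.incoming v).ncard := (Set.ncard_pos hin).2 ⟨b, hb⟩
    lia

theorem not_hasTrivialThread_of_two_incoming (hout : (Q.outgoing v).Finite)
    (hv : (Q.incoming v).ncard = 2) : ¬ Q.HasTrivialThread v := by
  rintro (hdeg | ⟨hdeg, a, _, ha, -, -⟩) <;> rw [deg_eq_ncard_add_ncard] at hdeg
  · lia
  · have : 0 < (Q.outgoing v).ncard := (Set.ncard_pos hout).2 ⟨a, ha⟩
    lia

theorem ncard_localSplits_of_outgoing_eq_singleton {a : A} (ha : Q.outgoing v = {a})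
    (hin : Q.incoming v = ∅) : (Q.localSplits v).ncard = 2 := by
  have not_permComp : ∀ b, ¬ Q.PermComp a b := fun b hab => by
    simpa [ha, hin] using hab.mem_outgoing_iff (v := v)
  have hasTrivialThread : Q.HasTrivialThread v := .inl (by simp [deg_eq_ncard_add_ncard, ha, hin])
  rw [localSplits, ha, hin, junctions_singleton_empty not_permComp hasTrivialThread,
    Set.ncard_pair (by simp)]

theorem ncard_localSplits_of_incoming_eq_singleton {b : A} (hout : Q.outgoing v = ∅)
    (hb : Q.incoming v = {b}) : (Q.localSplits v).ncard = 2 := by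
  have not_permComp : ∀ a, ¬ Q.PermComp a b := fun a hab => by
    simpa [hout, hb] using hab.mem_outgoing_iff (v := v)
  have hasTrivialThread : Q.HasTrivialThread v := .inl (by simp [deg_eq_ncard_add_ncard, hout, hb])
  rw [localSplits, hout, hb, ← ncard_junctions_flip,
    junctions_singleton_empty not_permComp hasTrivialThread, Set.ncard_pair (by simp)]

theorem ncard_localSplits_of_eq_singleton {a b : A} (ha : Q.outgoing v = {a})
    (hb : Q.incoming v = {b}) : (Q.localSplits v).ncard = 2 := by
  have hav : Q.src a = v := ha.ge rfl
  have hbv : Q.tgt b = v := hb.ge rfl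
  have eq_of_permComp {a' b'} (h : Q.PermComp a' b') : a' = a ↔ b' = b := by
    simpa [ha, hb] using h.mem_outgoing_iff (v := v)
  have hasTrivialThread_iff : Q.HasTrivialThread v ↔ Q.PermComp a b := by
    have hdeg : Q.deg v = 2 := by simp [deg_eq_ncard_add_ncard, ha, hb]
    constructor
    · rintro (h | ⟨-, a', b', ha', hb', hrel⟩)
      · lia
      · obtain rfl : a' = a := ha.le ha'
        obtain rfl : b' = b := hb.le hb'
        exact ⟨hav.trans hbv.symm, hrel⟩
    · exact fun h => .inr ⟨hdeg, a, b, hav, hbv, h.2⟩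
  rw [localSplits, ha, hb]
  by_cases hab : Q.PermComp a b
  · rw [junctions_singleton_singleton_of_rel hab (hasTrivialThread_iff.2 hab),
      Set.ncard_pair (by simp)]
  · rw [junctions_singleton_singleton_of_forall_not _ _ (hasTrivialThread_iff.not.2 hab),
      Set.ncard_pair (by simp)]
    · rintro b' h
      obtain rfl := (eq_of_permComp h).1 rfl
      exact hab h
    · rintro a' h
      obtain rfl := (eq_of_permComp h).2 rfl
      exact hab h

theorem IsGentle.ncard_localSplits (hQ : Q.IsGentle) (hout : (Q.outgoing v).Finite)
    (hin : (Q.incoming v).Finite) : (Q.localSplits v).ncard = 2 := by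
  have permComp_mem : ∀ a b, Q.PermComp a b → (a ∈ Q.outgoing v ↔ b ∈ Q.incoming v) :=
    fun _ _ h => h.mem_outgoing_iff
  have out_le : (Q.outgoing v).ncard ≤ 2 := hQ.out_le v
  have in_le : (Q.incoming v).ncard ≤ 2 := hQ.in_le v
  rcases out_le.eq_or_lt with hout2 | hout1
  · exact (ncard_junctions_eq_left hQ.rightUnique_permComp permComp_mem
      (fun _ => hQ.exists_permComp_of_two_outgoing hout2)
      (not_hasTrivialThread_of_two_outgoing hin hout2)).trans hout2
  rcases in_le.eq_or_lt with hin2 | hin1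
  · exact (ncard_junctions_eq_right hQ.leftUnique_permComp permComp_mem
      (fun _ => hQ.exists_permComp_of_two_incoming hin2)
      (not_hasTrivialThread_of_two_incoming hout hin2)).trans hin2
  rcases (Set.ncard_le_one_iff_eq hout).1 (Nat.le_of_lt_succ hout1) with ho | ⟨a, ho⟩ <;>
    rcases (Set.ncard_le_one_iff_eq hin).1 (Nat.le_of_lt_succ hin1) with hi | ⟨b, hi⟩
  · obtain ⟨a, ha⟩ := hQ.exists_mem_outgoing_or_mem_incoming v
    simp [ho, hi] at ha
  · exact ncard_localSplits_of_incoming_eq_singleton ho hi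
  · exact ncard_localSplits_of_outgoing_eq_singleton ho hi
  · exact ncard_localSplits_of_eq_singleton ho hi

/-- The pairs of half threads that meet at `v`, each half listed from `v` outwards. -/
def halfThreads (Q : BQuiv V A) (v : V) : Set (List A × List A) :=
  ({l | IsTerminalChain (flip Q.PermComp) l} ×ˢ {w | IsTerminalChain Q.PermComp w}) ∩
    Prod.map List.head? List.head? ⁻¹' Q.localSplits v

theorem IsGentle.bijOn_head?_halfThreads (hQ : Q.IsGentle) (v : V) :
    Set.BijOn (Prod.map List.head? List.head?) (Q.halfThreads v) (Q.localSplits v) :=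
  ((bijOn_head?_isTerminalChain hQ.leftUnique_permComp.flip hQ.wellFounded_permComp).prodMap
    (bijOn_head?_isTerminalChain hQ.rightUnique_permComp hQ.wellFounded_flip_permComp)).subset_right
      (by simp)

/-- The split permitted threads with center `v`, each encoded as a permitted thread together with
the position at which it is cut. -/
def threadSplits (Q : BQuiv V A) (v : V) : Set (Path Q × ℕ) :=
  {x | IsPermThread Q x.1 ∧ x.2 ≤ x.1.arrows.length ∧ x.1.vertexAt x.2 = v}

/-- The two halves of a split path, each listed from the cut outwards. -/
def halves (x : Path Q × ℕ) : List A × List A :=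
  ((x.1.arrows.take x.2).reverse, x.1.arrows.drop x.2)

theorem isPermThread_iff {p : Path Q} :
    IsPermThread Q p ↔
      IsMaximalChain Q.PermComp p.arrows ∧ (p.arrows = [] → Q.HasTrivialThread p.base) := by
  have isChain_iff : p.arrows.IsChain Q.PermComp ↔ p.Permitted :=
    isChain_permComp_iff.trans (and_iff_right p.chain)
  rw [IsPermThread, IsMaximalChain, isChain_iff]
  by_cases h : p.arrows = []
  · have permitted : p.Permitted := by
      rw [Path.Permitted, h]
      exact List.isChain_nil
    simp [h, HasTrivialThread, permitted]
  · simp only [h, ne_eq, not_false_eq_true, true_and, false_and, or_false, false_implies, and_true,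
      PermComp, not_and, not_not]
    refine and_congr_right fun _ => and_congr ?_ ?_
    · exact forall_comm.trans (forall_congr' fun _ => forall_comm)
    · exact forall_congr' fun _ => forall_comm

namespace Path

theorem src_getLast?_take (p : Path Q) (n : ℕ) :
    ∀ a ∈ (p.arrows.take n).getLast?, Q.src a = p.vertexAt n := by
  intro a ha
  have hchain := p.chain
  have hbase := p.base_eq
  rw [← List.take_append_drop n p.arrows] at hchain hbase
  rw [vertexAt]
  rcases h : p.arrows.drop n with _ | ⟨b, w⟩
  · exact hbase a (by simpa [h] using ha)
  · exact (List.isChain_append.1 hchain).2.2 a ha b (by simp [h])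

theorem tgt_head?_drop (p : Path Q) (n : ℕ) :
    ∀ b ∈ (p.arrows.drop n).head?, Q.tgt b = p.vertexAt n := by
  intro b hb
  rw [vertexAt, Option.mem_def.1 hb]
  rfl

theorem ext_of_vertexAt_eq {p q : Path Q} {n : ℕ} (h : p.arrows = q.arrows)
    (hv : p.vertexAt n = q.vertexAt n) : p = q := by
  suffices p.base = q.base by
    cases p; cases q; simp_all
  rcases ha : p.arrows.getLast? with _ | a
  · have hp : p.arrows = [] := List.getLast?_eq_none_iff.1 ha
    simpa [vertexAt, ← h, hp] using hv
  · exact (p.base_eq a ha).symm.trans (q.base_eq a (h ▸ ha))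

theorem exists_arrows_eq_reverse_append {l w : List A} (hchain : Q.PathChain (l.reverse ++ w))
    (hl : ∀ a ∈ l.head?, Q.src a = v) (hw : ∀ b ∈ w.head?, Q.tgt b = v) :
    ∃ p : Path Q, p.arrows = l.reverse ++ w ∧ p.vertexAt l.length = v := by
  refine ⟨⟨(l.reverse ++ w).getLast?.elim v Q.src, l.reverse ++ w, hchain, ?_⟩, rfl, ?_⟩
  · intro a ha
    rw [ha]
    rfl
  · cases w with
    | nil => cases l <;> simp_all [vertexAt]
    | cons b w => simpa [vertexAt] using hw

end Path

theorem isPermThread_iff_halves_mem {p : Path Q} {n : ℕ} (hv : p.vertexAt n = v) :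
    IsPermThread Q p ↔ halves (p, n) ∈ Q.halfThreads v := by
  have split_eq : (halves (p, n)).1.reverse ++ (halves (p, n)).2 = p.arrows := by
    simp [halves]
  have mem_out : ∀ a ∈ (halves (p, n)).1.head?, a ∈ Q.outgoing v := by
    rw [halves, List.head?_reverse, ← hv]
    exact p.src_getLast?_take n
  have mem_in : ∀ b ∈ (halves (p, n)).2.head?, b ∈ Q.incoming v := by
    rw [halves, ← hv]
    exact p.tgt_head?_drop n
  have base_eq (h : p.arrows = []) : p.base = v := by
    rw [← hv, Path.vertexAt, h, List.drop_nil]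
    rfl
  have trivial_iff : (p.arrows = [] → Q.HasTrivialThread p.base) ↔
      ((halves (p, n)).1.head? = none → (halves (p, n)).2.head? = none → Q.HasTrivialThread v) := by
    rw [List.head?_eq_none_iff, List.head?_eq_none_iff, ← and_imp,
      ← List.reverse_eq_nil_iff (xs := (halves (p, n)).1), ← List.append_eq_nil_iff, split_eq]
    exact forall_congr' fun h => by rw [base_eq h]
  rw [isPermThread_iff, trivial_iff, ← split_eq, isMaximalChain_reverse_append_iff]
  exact ⟨fun ⟨⟨hl, hw, hj⟩, ht⟩ => ⟨⟨hl, hw⟩, hj, mem_out, mem_in, ht⟩,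
    fun ⟨⟨hl, hw⟩, hj, _, _, ht⟩ => ⟨⟨hl, hw, hj⟩, ht⟩⟩

theorem bijOn_halves (v : V) : Set.BijOn halves (Q.threadSplits v) (Q.halfThreads v) := by
  refine ⟨?_, ?_, ?_⟩
  · rintro ⟨p, n⟩ ⟨hp, -, hv⟩
    exact (isPermThread_iff_halves_mem hv).1 hp
  · rintro ⟨p, n⟩ ⟨-, hn, hv⟩ ⟨q, m⟩ ⟨-, hm, hv'⟩ h
    obtain ⟨htake, hdrop⟩ := Prod.mk.inj h
    replace htake := List.reverse_injective htake
    have arrows_eq : p.arrows = q.arrows := by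
      rw [← List.take_append_drop n p.arrows, htake, hdrop, List.take_append_drop]
    obtain rfl : n = m := by
      simpa [hn, hm] using congrArg List.length htake
    rw [Path.ext_of_vertexAt_eq arrows_eq (hv.trans hv'.symm)]
  · rintro ⟨l, w⟩ hlw
    obtain ⟨⟨hl, hw⟩, hjunction, hout, hin, -⟩ := id hlw
    have hchain : (l.reverse ++ w).IsChain Q.PermComp :=
      (isMaximalChain_reverse_append_iff.2 ⟨hl, hw, hjunction⟩).1
    obtain ⟨p, hp, hv⟩ :=
      Path.exists_arrows_eq_reverse_append (isChain_permComp_iff.1 hchain).1 hout hin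
    have halves_eq : halves (p, l.length) = (l, w) := by
      simp [halves, hp]
    exact ⟨(p, l.length), ⟨(isPermThread_iff_halves_mem hv).2 (halves_eq ▸ hlw), by simp [hp], hv⟩,
      halves_eq⟩

end BQuiv

theorem stmt1_general {V A : Type} (Q : BQuiv V A) (hQ : Q.IsGentle) (v : V)
    (hout : (Q.outgoing v).Finite) (hin : (Q.incoming v).Finite) :
    Nat.card {x : BQuiv.Path Q × ℕ //
      IsPermThread Q x.1 ∧ x.2 ≤ x.1.arrows.length ∧ x.1.vertexAt x.2 = v} = 2 :=
  ((hQ.bijOn_head?_halfThreads v).comp (bijOn_halves v)).ncard_eq.trans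
    (hQ.ncard_localSplits hout hin)

/-- Let `(Q, I)` be a gentle bound quiver.  Then every vertex of `Q`
is the center of exactly two split permitted threads.  (A split permitted thread is a
pair `(η″, η′)` of paths with `η″η′` a permitted thread, encoded here as a permitted
thread `p` together with a cut position `n ≤ ℓ(p)`; its center is the vertex of `p`
sitting between the first `n` arrows and the rest.) -/
theorem stmt1 {V A : Type} [Fintype V] [Fintype A] (Q : BQuiv V A) (hQ : Q.IsGentle) :
    ∀ v : V,
      Nat.card {x : BQuiv.Path Q × ℕ //
        IsPermThread Q x.1 ∧ x.2 ≤ x.1.arrows.length ∧ x.1.vertexAt x.2 = v} = 2 :=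
  fun v => stmt1_general Q hQ v (Set.toFinite _) (Set.toFinite _)
end

section
/- Let (Q,I) be a gentle bound quiver containing no full cycle (equivalently, such that the gentle algebra kQ/I has finite global dimension). Then: (a) every non-trivial forbidden path of (Q,I) is a subpath of exactly one forbidden thread; (b) every vertex of Q is the center of exactly two split forbidden threads; (c) for each vertex i of Q there exists at most one almost-full cycle at i, and any almost-full cycle has length at least 2. -/
set_option autoImplicit false

attribute [local instance] Classical.propDecidable

namespace BQuiv

variable {V A : Type}

/-- A full cycle: a non-trivial closed forbidden path without repeated arrows whose
wrap-around length-two subpath is again a relation. -/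
def IsFullCycle (Q : BQuiv V A) (p : Path Q) : Prop :=
  p.arrows ≠ [] ∧ p.Forbidden ∧ p.tgtV = p.base ∧ p.arrows.Nodup ∧
  ∀ a b, p.arrows.getLast? = some a → p.arrows.head? = some b → Q.rel a b

/-- An almost-full cycle at the vertex `i`: a non-trivial closed forbidden path without
repeated arrows, with source (= target) `i`, whose wrap-around length-two subpath is
not a relation. -/
def IsAlmostFullCycleAt (Q : BQuiv V A) (p : Path Q) (i : V) : Prop :=
  p.base = i ∧ p.arrows ≠ [] ∧ p.Forbidden ∧ p.tgtV = p.base ∧ p.arrows.Nodup ∧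
  ∀ a b, p.arrows.getLast? = some a → p.arrows.head? = some b → ¬ Q.rel a b

end BQuiv

open BQuiv

/-!
In a gentle bound quiver the relation `ab ∈ I` is a partial injection on the arrows. Without full
cycles it is acyclic, hence (finitely many arrows) well-founded in both directions, so each arrow
lies in exactly one maximal chain, its forbidden thread, and at exactly one position of it.

A split of a thread with center `v` is therefore determined by the arrow just before the cut, which
starts at `v`, or, if the cut is at the left end, by the first arrow after it, which ends at `v` and
has no predecessor. If `o` arrows start at `v`, `i` arrows end at `v`, and `u` of the latter have no
predecessor, then gentleness gives `o + u ≤ 2` and `i - u ≤ o`; since `o + i > 0`, these leave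
`o + u = 2`, or `o + u = 1` precisely when the trivial path at `v` is a thread.

A closed forbidden path at `v` cuts its thread at two distinct splits with center `v`. As there are
only two, there is at most one such path.
-/

section Chains

variable {α : Type*} {r : α → α → Prop}

theorem exists_nodup_isChain_cons_of_reflTransGen {a b : α} (h : Relation.ReflTransGen r a b) :
    ∃ l, (a :: l).Nodup ∧ (a :: l).IsChain r ∧ b ∈ (a :: l).getLast? := by
  induction h using Relation.ReflTransGen.head_induction_on with
  | refl => exact ⟨[], by simp⟩
  | @head a c hac _ ih =>
    obtain ⟨l, hnodup, hchain, hlast⟩ := ih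
    by_cases ha : a ∈ c :: l
    · obtain ⟨s, t, hst⟩ := List.append_of_mem ha
      have hsuffix : a :: t <:+ c :: l := ⟨s, hst.symm⟩
      refine ⟨t, hnodup.sublist hsuffix.sublist, hchain.suffix hsuffix, ?_⟩
      rwa [hst, List.getLast?_append_of_ne_nil _ (List.cons_ne_nil a t)] at hlast
    · exact ⟨c :: l, List.nodup_cons.2 ⟨ha, hnodup⟩, hchain.cons_cons hac, by simpa using hlast⟩

theorem exists_eq_append_cons_of_getElem?_eq_some {l : List α} {n : ℕ} {a : α}
    (h : l[n]? = some a) : ∃ x y, l = x ++ a :: y ∧ n = x.length := by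
  obtain ⟨hn, rfl⟩ := List.getElem?_eq_some_iff.1 h
  exact ⟨l.take n, l.drop (n + 1), by simp, (List.length_take_of_le hn.le).symm⟩

theorem wellFounded_of_forall_not_transGen [Finite α] (h : ∀ a, ¬ Relation.TransGen r a a) :
    WellFounded r :=
  have : Std.Irrefl (Relation.TransGen r) := ⟨h⟩
  Subrelation.wf Relation.TransGen.single
    (Finite.wellFounded_of_trans_of_irrefl (Relation.TransGen r))

variable {a b : α} {l m : List α}

/-- `IsMaximalRun r a l` says that `a :: l` is an `r`-chain which cannot be prolonged at its end:
the part of a maximal chain from `a` onwards. -/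
def IsMaximalRun (r : α → α → Prop) (a : α) (l : List α) : Prop :=
  (a :: l).IsChain r ∧ ∀ z ∈ (a :: l).getLast?, ∀ c, ¬ r z c

namespace IsMaximalRun

theorem nil_iff : IsMaximalRun r a [] ↔ ∀ c, ¬ r a c := by
  simp [IsMaximalRun]

theorem cons_iff : IsMaximalRun r a (b :: l) ↔ r a b ∧ IsMaximalRun r b l := by
  simp only [IsMaximalRun, List.isChain_cons_cons, List.getLast?_cons_cons, and_assoc]

theorem isPrefix_of_isChain (hr : Relator.RightUnique r) (hl : IsMaximalRun r a l)
    (hm : (a :: m).IsChain r) : m <+: l := by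
  induction m generalizing a l with
  | nil => exact List.nil_prefix
  | cons b m ih =>
    obtain ⟨hab, hm⟩ := List.isChain_cons_cons.1 hm
    cases l with
    | nil => exact absurd hab (nil_iff.1 hl b)
    | cons c l =>
      obtain ⟨hac, hl⟩ := cons_iff.1 hl
      obtain rfl := hr hab hac
      exact List.cons_prefix_cons.2 ⟨rfl, ih hl hm⟩

theorem unique (hr : Relator.RightUnique r) (hl : IsMaximalRun r a l) (hm : IsMaximalRun r a m) :
    l = m :=
  (hm.isPrefix_of_isChain hr hl.1).eq_of_length_le (hl.isPrefix_of_isChain hr hm.1).length_le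

theorem exists_of_wellFounded (hr : WellFounded (flip r)) (a : α) : ∃ l, IsMaximalRun r a l := by
  induction a using hr.induction with
  | _ a ih =>
    by_cases h : ∃ c, r a c
    · obtain ⟨c, hac⟩ := h
      obtain ⟨l, hl⟩ := ih c hac
      exact ⟨c :: l, cons_iff.2 ⟨hac, hl⟩⟩
    · exact ⟨[], nil_iff.2 (not_exists.1 h)⟩

end IsMaximalRun

end Chains

namespace BQuiv

variable {V A : Type} {Q : BQuiv V A} {p q : Path Q} {a b : A} {v : V} {x y x' y' : List A}

namespace IsGentle

theorem rightUnique_rel (hQ : Q.IsGentle) : Relator.RightUnique Q.rel :=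
  fun b c c' => hQ.unique_rel_pre b c c'

theorem rightUnique_flip_rel (hQ : Q.IsGentle) : Relator.RightUnique (flip Q.rel) :=
  fun b a a' => hQ.unique_rel_post b a a'

theorem not_transGen_rel_self (hQ : Q.IsGentle) (hfc : ¬ ∃ p : Path Q, IsFullCycle Q p) (a : A) :
    ¬ Relation.TransGen Q.rel a a := by
  intro h
  obtain ⟨z, haz, hza⟩ := Relation.TransGen.tail'_iff.1 h
  obtain ⟨l, hnodup, hchain, hlast⟩ := exists_nodup_isChain_cons_of_reflTransGen haz
  have eq_last : ∀ w, (a :: l).getLast? = some w → w = z :=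
    fun w hw => Option.some_injective _ (hw.symm.trans hlast)
  refine hfc ⟨⟨Q.tgt a, a :: l, hchain.imp hQ.rel_comp, ?_⟩, ?_⟩
  · intro w hw
    exact eq_last w hw ▸ hQ.rel_comp z a hza
  · refine ⟨List.cons_ne_nil a l, hchain, rfl, hnodup, fun w c hw hc => ?_⟩
    obtain rfl : a = c := by simpa using hc
    exact eq_last w hw ▸ hza

theorem src_ne_tgt (hQ : Q.IsGentle) (hfc : ¬ ∃ p : Path Q, IsFullCycle Q p) (a : A) :
    Q.src a ≠ Q.tgt a := by
  intro hloop
  have hrel : ¬ Q.rel a a := fun h => hQ.not_transGen_rel_self hfc a (.single h)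
  obtain ⟨m, -, hm⟩ := hQ.admissible
  exact hm (List.replicate m a) List.length_replicate (List.isChain_replicate_of_rel m hloop)
    (List.isChain_replicate_of_rel m hrel)

theorem wellFounded_rel [Finite A] (hQ : Q.IsGentle) (hfc : ¬ ∃ p : Path Q, IsFullCycle Q p) :
    WellFounded Q.rel :=
  wellFounded_of_forall_not_transGen (hQ.not_transGen_rel_self hfc)

theorem wellFounded_flip_rel [Finite A] (hQ : Q.IsGentle)
    (hfc : ¬ ∃ p : Path Q, IsFullCycle Q p) : WellFounded (flip Q.rel) :=
  wellFounded_of_forall_not_transGen fun a h =>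
    hQ.not_transGen_rel_self hfc a (Relation.transGen_swap.1 h)

end IsGentle

namespace Path

theorem ext_of_arrows_ne_nil (hne : p.arrows ≠ []) (h : p.arrows = q.arrows) : p = q := by
  have hlast := List.getLast?_eq_some_getLast hne
  have hbase : p.base = q.base := (p.base_eq _ hlast).symm.trans (q.base_eq _ (h ▸ hlast))
  cases p; cases q; simp_all

/-- The trivial path `e_v`. -/
def trivial (Q : BQuiv V A) (v : V) : Path Q where
  base := v
  arrows := []
  chain := .nil
  base_eq := by simp

theorem eq_trivial_of_arrows_eq_nil (h : p.arrows = []) : p = trivial Q p.base := by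
  cases p; simp_all [trivial]

theorem vertexAt_length (h : p.arrows = x ++ a :: y) : p.vertexAt x.length = Q.tgt a := by
  simp [vertexAt, h]

theorem vertexAt_length_append_singleton (h : p.arrows = x ++ a :: y) :
    p.vertexAt (x.length + 1) = Q.src a := by
  cases y with
  | nil => simp [vertexAt, h, p.base_eq a (by simp [h])]
  | cons b y =>
    have hab := (List.isChain_append_cons_cons.1 (h ▸ p.chain)).2.1
    simp [vertexAt, h, hab]

end Path

section Threads

theorem isForbThread_iff_isMaximalRun (hQ : Q.IsGentle) (h : p.arrows = x ++ a :: y) :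
    IsForbThread Q p ↔ IsMaximalRun (flip Q.rel) a x.reverse ∧ IsMaximalRun Q.rel a y := by
  have hhead : (a :: x.reverse).getLast? = p.arrows.head? := by
    rw [← List.reverse_concat, List.getLast?_reverse, h]
    cases x <;> rfl
  have hlast : (a :: y).getLast? = p.arrows.getLast? := by
    rw [h, List.getLast?_append_of_ne_nil _ (List.cons_ne_nil a y)]
  have hchain : p.Forbidden ↔ (a :: x.reverse).IsChain (flip Q.rel) ∧ (a :: y).IsChain Q.rel := by
    rw [← List.reverse_concat, List.isChain_reverse]
    change p.arrows.IsChain Q.rel ↔ _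
    rw [h]
    exact List.isChain_split
  have hne : p.arrows ≠ [] := by simp [h]
  simp only [IsForbThread, IsMaximalRun, hhead, hlast, hchain, hne, ne_eq, not_false_eq_true,
    true_and, false_and, or_false, flip, Option.mem_def]
  constructor
  · rintro ⟨⟨hc, hc'⟩, hpre, hpost⟩
    exact ⟨⟨hc, fun b hb c hr => hpre c b hb (hQ.rel_comp c b hr) hr⟩,
      ⟨hc', fun b hb c hr => hpost b c hb (hQ.rel_comp b c hr) hr⟩⟩
  · rintro ⟨⟨hc, hpre⟩, ⟨hc', hpost⟩⟩
    exact ⟨⟨hc, hc'⟩, fun c b hb _ => hpre b hb c, fun b c hb _ => hpost b hb c⟩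

theorem IsForbThread.eq_of_common_arrow (hQ : Q.IsGentle) (hp : IsForbThread Q p)
    (hq : IsForbThread Q q) (h : p.arrows = x ++ a :: y) (h' : q.arrows = x' ++ a :: y') :
    p = q ∧ x = x' := by
  obtain ⟨hleft, hright⟩ := (isForbThread_iff_isMaximalRun hQ h).1 hp
  obtain ⟨hleft', hright'⟩ := (isForbThread_iff_isMaximalRun hQ h').1 hq
  obtain rfl := List.reverse_injective (hleft.unique hQ.rightUnique_flip_rel hleft')
  obtain rfl := hright.unique hQ.rightUnique_rel hright'
  exact ⟨Path.ext_of_arrows_ne_nil (by simp [h]) (h.trans h'.symm), rfl⟩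

theorem exists_isForbThread_of_arrow [Finite A] (hQ : Q.IsGentle)
    (hfc : ¬ ∃ p : Path Q, IsFullCycle Q p) (a : A) :
    ∃ p x y, IsForbThread Q p ∧ p.arrows = x ++ a :: y := by
  obtain ⟨x, hx⟩ := IsMaximalRun.exists_of_wellFounded (hQ.wellFounded_rel hfc : WellFounded
    (flip (flip Q.rel))) a
  obtain ⟨y, hy⟩ := IsMaximalRun.exists_of_wellFounded (hQ.wellFounded_flip_rel hfc) a
  have hne : x.reverse ++ a :: y ≠ [] := by simp
  have hchain : (x.reverse ++ a :: y).IsChain Q.rel := by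
    rw [List.isChain_split, ← List.reverse_cons, List.isChain_reverse]
    exact ⟨hx.1, hy.1⟩
  let p : Path Q :=
    { base := Q.src ((x.reverse ++ a :: y).getLast hne)
      arrows := x.reverse ++ a :: y
      chain := hchain.imp hQ.rel_comp
      base_eq := fun b hb => by rw [List.getLast_of_getLast?_eq_some hb] }
  exact ⟨p, x.reverse, y,
    (isForbThread_iff_isMaximalRun hQ rfl).2 ⟨by rwa [List.reverse_reverse], hy⟩, rfl⟩

theorem existsUnique_isForbThread_of_isChain [Finite A] (hQ : Q.IsGentle)
    (hfc : ¬ ∃ p : Path Q, IsFullCycle Q p) {l : List A} (hne : l ≠ []) (hl : l.IsChain Q.rel) :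
    ∃! p : Path Q, IsForbThread Q p ∧ l <:+: p.arrows := by
  obtain ⟨a, l, rfl⟩ := List.exists_cons_of_ne_nil hne
  obtain ⟨p, x, y, hp, hxy⟩ := exists_isForbThread_of_arrow hQ hfc a
  obtain ⟨t, rfl⟩ := ((isForbThread_iff_isMaximalRun hQ hxy).1 hp).2.isPrefix_of_isChain
    hQ.rightUnique_rel hl
  refine ⟨p, ⟨hp, x, t, by simp [hxy]⟩, ?_⟩
  rintro q ⟨hq, s, t', hst⟩
  exact (hq.eq_of_common_arrow hQ hp (x := s) (y := l ++ t') (by simp [← hst]) hxy).1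

end Threads

section Counting

variable (Q v) in
/-- The arrows ending at `v` with which a forbidden thread begins, in the order of the list of its
arrows: the cut at the left end of that thread has center `v`. -/
def initialArrows : Set A := {b | Q.tgt b = v ∧ ∀ a, ¬ Q.rel a b}

variable (Q v) in
/-- The labels of the split forbidden threads with center `v`: a split `(θ″, θ′)` is labelled by the
last listed arrow of `θ″` or, if `θ″` is trivial, by the first listed arrow of `θ′`, and by `none`
if both are trivial. -/
def splitLabels : Set (Option A) :=
  some '' ({a | Q.src a = v} ∪ Q.initialArrows v) ∪
    {o | o = none ∧ IsForbThread Q (Path.trivial Q v)}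

theorem isForbThread_trivial_iff : IsForbThread Q (Path.trivial Q v) ↔
    Q.deg v = 1 ∨ Q.deg v = 2 ∧ ∃ α β, Q.src α = v ∧ Q.tgt β = v ∧ Q.rel α β := by
  simp [IsForbThread, Path.trivial]

theorem IsGentle.deg_pos [Finite A] (hQ : Q.IsGentle) (v : V) : 0 < Q.deg v := by
  obtain ⟨a⟩ := hQ.has_arrow
  have hincident : (∃ b, Q.src b = v) ∨ ∃ b, Q.tgt b = v := by
    rcases (hQ.connected v (Q.src a)).cases_head with h | ⟨c, ⟨b, hb⟩, -⟩
    · exact .inl ⟨a, h.symm⟩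
    · exact hb.imp (fun h => ⟨b, h.1⟩) (fun h => ⟨b, h.2⟩)
  rcases hincident with ⟨b, hb⟩ | ⟨b, hb⟩
  · have : Nonempty {a // Q.src a = v} := ⟨b, hb⟩
    exact Nat.add_pos_left Nat.card_pos _
  · have : Nonempty {a // Q.tgt a = v} := ⟨b, hb⟩
    exact Nat.add_pos_right _ Nat.card_pos

theorem IsGentle.ncard_src_add_ncard_initialArrows_le_two [Finite A] (hQ : Q.IsGentle) (v : V) :
    {a | Q.src a = v}.ncard + (Q.initialArrows v).ncard ≤ 2 := by
  rcases {a | Q.src a = v}.eq_empty_or_nonempty with hout | ⟨a, ha⟩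
  · have : (Q.initialArrows v).ncard ≤ {b | Q.tgt b = v}.ncard :=
      Set.ncard_le_ncard fun b hb => hb.1
    rw [hout, Set.ncard_empty, zero_add]
    exact this.trans (hQ.in_le v)
  rcases (Q.initialArrows v).eq_empty_or_nonempty with hinit | ⟨b, hb⟩
  · rw [hinit, Set.ncard_empty, add_zero]
    exact hQ.out_le v
  -- An outgoing and an initial arrow never form a relation, so each determines the other.
  have hout : {a | Q.src a = v}.ncard ≤ 1 := (Set.ncard_le_one).2 fun c hc c' hc' =>
    hQ.unique_nonrel_post b c c' (hc.trans hb.1.symm) (hc'.trans hb.1.symm) (hb.2 c) (hb.2 c')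
  have hinit : (Q.initialArrows v).ncard ≤ 1 := (Set.ncard_le_one).2 fun c hc c' hc' =>
    hQ.unique_nonrel_pre a c c' (ha.trans hc.1.symm) (ha.trans hc'.1.symm) (hc.2 a) (hc'.2 a)
  exact add_le_add hout hinit

theorem IsGentle.ncard_rel_le_ncard_src [Finite A] (hQ : Q.IsGentle) (v : V) :
    {b | Q.tgt b = v ∧ ∃ a, Q.rel a b}.ncard ≤ {a | Q.src a = v}.ncard := by
  choose! pred hpred using fun (b : A) (hb : ∃ a, Q.rel a b) => hb
  refine Set.ncard_le_ncard_of_injOn pred ?_ ?_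
  · rintro b ⟨hb, hrel⟩
    exact (hQ.rel_comp _ _ (hpred b hrel)).trans hb
  · rintro b ⟨-, hb⟩ c ⟨-, hc⟩ heq
    exact hQ.unique_rel_pre _ b c (hpred b hb) (heq ▸ hpred c hc)

theorem ncard_tgt_eq [Finite A] (Q : BQuiv V A) (v : V) : {b | Q.tgt b = v}.ncard =
    {b | Q.tgt b = v ∧ ∃ a, Q.rel a b}.ncard + (Q.initialArrows v).ncard := by
  rw [← Set.ncard_inter_add_ncard_sdiff_eq_ncard {b | Q.tgt b = v} {b | ∃ a, Q.rel a b}]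
  simp only [initialArrows, ← not_exists]
  rfl

theorem IsGentle.ncard_src_add_ncard_initialArrows [Finite A] (hQ : Q.IsGentle) (v : V) :
    {a | Q.src a = v}.ncard + (Q.initialArrows v).ncard =
      if IsForbThread Q (Path.trivial Q v) then 1 else 2 := by
  have hdeg : Q.deg v = {a | Q.src a = v}.ncard + {b | Q.tgt b = v}.ncard := rfl
  have hrel : (∃ α β, Q.src α = v ∧ Q.tgt β = v ∧ Q.rel α β) ↔
      0 < {b | Q.tgt b = v ∧ ∃ a, Q.rel a b}.ncard := by
    rw [Set.ncard_pos]
    constructor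
    · rintro ⟨α, β, -, hβ, h⟩
      exact ⟨β, hβ, α, h⟩
    · rintro ⟨β, hβ, α, h⟩
      exact ⟨α, β, (hQ.rel_comp α β h).trans hβ, hβ, h⟩
  have htriv := isForbThread_trivial_iff (Q := Q) (v := v)
  rw [hrel] at htriv
  have hpos := hQ.deg_pos v
  have hle := hQ.ncard_src_add_ncard_initialArrows_le_two v
  have hmatch := hQ.ncard_rel_le_ncard_src v
  have hin := ncard_tgt_eq Q v
  split_ifs with h
  · rw [htriv] at h
    omega
  · rw [htriv] at h
    omega

theorem ncard_splitLabels [Finite A] (hQ : Q.IsGentle) (hfc : ¬ ∃ p : Path Q, IsFullCycle Q p)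
    (v : V) : (Q.splitLabels v).ncard = 2 := by
  have hdisj : Disjoint {a | Q.src a = v} (Q.initialArrows v) :=
    Set.disjoint_left.2 fun a ha ha' => hQ.src_ne_tgt hfc a (ha.trans ha'.1.symm)
  have hcard : (some '' ({a | Q.src a = v} ∪ Q.initialArrows v)).ncard =
      if IsForbThread Q (Path.trivial Q v) then 1 else 2 := by
    rw [Set.ncard_image_of_injective _ (Option.some_injective A), Set.ncard_union_eq hdisj,
      hQ.ncard_src_add_ncard_initialArrows]
  by_cases h : IsForbThread Q (Path.trivial Q v)
  · simp only [h, if_true] at hcard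
    simp only [splitLabels, h, and_true, Set.ofPred_eq_eq_singleton, Set.union_singleton]
    rw [Set.ncard_insert_of_notMem (by simp), hcard]
  · simpa [splitLabels, h] using hcard

end Counting

section Splits

variable (Q v) in
/-- The split forbidden threads with center `v`: the pair `(p, n)` stands for the split of the
thread `p` whose left factor consists of the first `n` arrows of `p`. -/
def forbSplits : Set (Path Q × ℕ) :=
  {s | IsForbThread Q s.1 ∧ s.2 ≤ s.1.arrows.length ∧ s.1.vertexAt s.2 = v}

/-- The label of a split in the sense of `splitLabels`. Truncated subtraction makes the cut at the
left end share the formula of the other cuts. -/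
def splitLabel (s : Path Q × ℕ) : Option A := s.1.arrows[s.2 - 1]?

theorem mem_forbSplits_iff (hQ : Q.IsGentle) {n : ℕ} :
    (p, n) ∈ Q.forbSplits v ↔ IsForbThread Q p ∧ ((p = Path.trivial Q v ∧ n = 0) ∨
      (∃ b y, p.arrows = b :: y ∧ n = 0 ∧ b ∈ Q.initialArrows v) ∨
      ∃ x a y, p.arrows = x ++ a :: y ∧ n = x.length + 1 ∧ Q.src a = v) := by
  refine and_congr_right fun hp => ⟨fun ⟨hn, hv⟩ => ?_, ?_⟩
  · rcases n with _ | n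
    · rcases harrows : p.arrows with _ | ⟨b, y⟩
      · have hbase : p.base = v := by simpa [Path.vertexAt, harrows] using hv
        exact .inl ⟨hbase ▸ Path.eq_trivial_of_arrows_eq_nil harrows, rfl⟩
      · have hrun := (isForbThread_iff_isMaximalRun hQ (x := []) harrows).1 hp
        have htgt : Q.tgt b = v := (Path.vertexAt_length (x := []) harrows).symm.trans hv
        exact .inr (.inl ⟨b, y, rfl, rfl, htgt, IsMaximalRun.nil_iff.1 hrun.1⟩)
    · obtain ⟨x, y, hxy, rfl⟩ :=
        exists_eq_append_cons_of_getElem?_eq_some (List.getElem?_eq_getElem hn)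
      exact .inr (.inr ⟨x, _, y, hxy, rfl,
        (Path.vertexAt_length_append_singleton hxy).symm.trans hv⟩)
  · rintro (⟨rfl, rfl⟩ | ⟨b, y, hby, rfl, hb⟩ | ⟨x, a, y, hxy, rfl, ha⟩)
    · exact ⟨Nat.zero_le _, rfl⟩
    · exact ⟨Nat.zero_le _, (Path.vertexAt_length (x := []) hby).trans hb.1⟩
    · exact ⟨by simp [hxy], (Path.vertexAt_length_append_singleton hxy).trans ha⟩

theorem splitLabel_zero (h : p.arrows = b :: y) : splitLabel (p, 0) = some b := by
  simp [splitLabel, h]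

theorem splitLabel_length_add_one (h : p.arrows = x ++ a :: y) :
    splitLabel (p, x.length + 1) = some a := by
  simp [splitLabel, h]

theorem mapsTo_splitLabel (hQ : Q.IsGentle) :
    Set.MapsTo splitLabel (Q.forbSplits v) (Q.splitLabels v) := by
  rintro ⟨p, n⟩ hs
  obtain ⟨hp, ⟨rfl, rfl⟩ | ⟨b, y, hby, rfl, hb⟩ | ⟨x, a, y, hxy, rfl, ha⟩⟩ :=
    (mem_forbSplits_iff hQ).1 hs
  · exact .inr ⟨rfl, hp⟩
  · exact .inl ⟨b, .inr hb, (splitLabel_zero hby).symm⟩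
  · exact .inl ⟨a, .inl ha, (splitLabel_length_add_one hxy).symm⟩

theorem injOn_splitLabel (hQ : Q.IsGentle) (hfc : ¬ ∃ p : Path Q, IsFullCycle Q p) :
    Set.InjOn splitLabel (Q.forbSplits v) := by
  rintro ⟨p, n⟩ hs ⟨q, m⟩ ht heq
  obtain ⟨hp, hs⟩ := (mem_forbSplits_iff hQ).1 hs
  obtain ⟨hq, ht⟩ := (mem_forbSplits_iff hQ).1 ht
  rcases hs with ⟨rfl, rfl⟩ | ⟨b, y, hby, rfl, hb⟩ | ⟨x, a, y, hxy, rfl, ha⟩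
  · rcases ht with ⟨rfl, rfl⟩ | ⟨b', y', hby', rfl, -⟩ | ⟨x', a', y', hxy', rfl, -⟩
    · rfl
    · cases heq.trans (splitLabel_zero hby')
    · cases heq.trans (splitLabel_length_add_one hxy')
  · rw [splitLabel_zero hby] at heq
    rcases ht with ⟨rfl, rfl⟩ | ⟨b', y', hby', rfl, -⟩ | ⟨x', a', y', hxy', rfl, ha'⟩
    · cases heq
    · obtain rfl := Option.some_injective _ (heq.trans (splitLabel_zero hby'))
      rw [(hp.eq_of_common_arrow hQ hq (x := []) (x' := []) hby hby').1]
    · obtain rfl := Option.some_injective _ (heq.trans (splitLabel_length_add_one hxy'))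
      exact absurd (ha'.trans hb.1.symm) (hQ.src_ne_tgt hfc b)
  · rw [splitLabel_length_add_one hxy] at heq
    rcases ht with ⟨rfl, rfl⟩ | ⟨b', y', hby', rfl, hb'⟩ | ⟨x', a', y', hxy', rfl, -⟩
    · cases heq
    · obtain rfl := Option.some_injective _ (heq.trans (splitLabel_zero hby'))
      exact absurd (ha.trans hb'.1.symm) (hQ.src_ne_tgt hfc a)
    · obtain rfl := Option.some_injective _ (heq.trans (splitLabel_length_add_one hxy'))
      obtain ⟨rfl, rfl⟩ := hp.eq_of_common_arrow hQ hq hxy hxy'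
      rfl

theorem surjOn_splitLabel [Finite A] (hQ : Q.IsGentle) (hfc : ¬ ∃ p : Path Q, IsFullCycle Q p) :
    Set.SurjOn splitLabel (Q.forbSplits v) (Q.splitLabels v) := by
  rintro _ (⟨a, ha | ha, rfl⟩ | ⟨rfl, htriv⟩)
  · obtain ⟨p, x, y, hp, hxy⟩ := exists_isForbThread_of_arrow hQ hfc a
    exact ⟨(p, x.length + 1),
      (mem_forbSplits_iff hQ).2 ⟨hp, .inr (.inr ⟨x, a, y, hxy, rfl, ha⟩)⟩,
      splitLabel_length_add_one hxy⟩
  · obtain ⟨p, x, y, hp, hxy⟩ := exists_isForbThread_of_arrow hQ hfc a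
    have hrun := ((isForbThread_iff_isMaximalRun hQ hxy).1 hp).1
    obtain rfl : x = [] := List.reverse_eq_nil_iff.1
      (hrun.unique hQ.rightUnique_flip_rel (IsMaximalRun.nil_iff.2 ha.2))
    exact ⟨(p, 0), (mem_forbSplits_iff hQ).2 ⟨hp, .inr (.inl ⟨a, y, hxy, rfl, ha⟩)⟩,
      splitLabel_zero hxy⟩
  · exact ⟨(Path.trivial Q v, 0), (mem_forbSplits_iff hQ).2 ⟨htriv, .inl ⟨rfl, rfl⟩⟩, rfl⟩

theorem ncard_forbSplits [Finite A] (hQ : Q.IsGentle) (hfc : ¬ ∃ p : Path Q, IsFullCycle Q p)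
    (v : V) : (Q.forbSplits v).ncard = 2 := by
  have hbij : Set.BijOn splitLabel (Q.forbSplits v) (Q.splitLabels v) :=
    ⟨mapsTo_splitLabel hQ, injOn_splitLabel hQ hfc, surjOn_splitLabel hQ hfc⟩
  exact hbij.ncard_eq.trans (ncard_splitLabels hQ hfc v)

end Splits

section ClosedPaths

/-- A non-trivial closed forbidden path based at `v`; almost-full cycles at `v` are the main
example. -/
structure IsClosedForbiddenAt (Q : BQuiv V A) (p : Path Q) (v : V) : Prop where
  base_eq : p.base = v
  arrows_ne_nil : p.arrows ≠ []
  forbidden : p.Forbidden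
  tgtV_eq : p.tgtV = v

theorem IsAlmostFullCycleAt.isClosedForbiddenAt (h : IsAlmostFullCycleAt Q p v) :
    IsClosedForbiddenAt Q p v :=
  ⟨h.1, h.2.1, h.2.2.1, h.2.2.2.1.trans h.1⟩

namespace IsClosedForbiddenAt

theorem two_le_length (hQ : Q.IsGentle) (hfc : ¬ ∃ p : Path Q, IsFullCycle Q p)
    (hp : IsClosedForbiddenAt Q p v) : 2 ≤ p.arrows.length := by
  rcases harrows : p.arrows with _ | ⟨a, _ | ⟨b, l⟩⟩
  · exact absurd harrows hp.arrows_ne_nil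
  · have hsrc : Q.src a = v := (p.base_eq a (by simp [harrows])).trans hp.base_eq
    have htgt : Q.tgt a = v := by simpa [Path.tgtV, harrows] using hp.tgtV_eq
    exact absurd (hsrc.trans htgt.symm) (hQ.src_ne_tgt hfc a)
  · simp

theorem exists_forbSplits [Finite A] (hQ : Q.IsGentle) (hfc : ¬ ∃ p : Path Q, IsFullCycle Q p)
    (hp : IsClosedForbiddenAt Q p v) : ∃ t : Path Q, ∃ x y, t.arrows = x ++ (p.arrows ++ y) ∧
      (t, x.length) ∈ Q.forbSplits v ∧ (t, x.length + p.arrows.length) ∈ Q.forbSplits v := by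
  obtain ⟨t, ⟨ht, x, y, hxy⟩, -⟩ :=
    existsUnique_isForbThread_of_isChain hQ hfc hp.arrows_ne_nil hp.forbidden
  rw [List.append_assoc] at hxy
  refine ⟨t, x, y, hxy.symm, ⟨ht, by simp [← hxy], ?_⟩, ⟨ht, by simp [← hxy], ?_⟩⟩
  · obtain ⟨a, l, hal⟩ := List.exists_cons_of_ne_nil hp.arrows_ne_nil
    have hcenter : t.vertexAt x.length = Q.tgt a :=
      Path.vertexAt_length (y := l ++ y) (by simp [← hxy, hal])
    have htgt : Q.tgt a = v := by simpa [Path.tgtV, hal] using hp.tgtV_eq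
    exact hcenter.trans htgt
  · obtain ⟨l, a, hla⟩ := (List.eq_nil_or_concat p.arrows).resolve_left hp.arrows_ne_nil
    have hcenter : t.vertexAt ((x ++ l).length + 1) = Q.src a :=
      Path.vertexAt_length_append_singleton (y := y) (by simp [← hxy, hla])
    have hsrc : Q.src a = v := (p.base_eq a (by simp [hla])).trans hp.base_eq
    simpa [hla, add_assoc] using hcenter.trans hsrc

theorem unique [Finite A] (hQ : Q.IsGentle) (hfc : ¬ ∃ p : Path Q, IsFullCycle Q p)
    (hp : IsClosedForbiddenAt Q p v) (hq : IsClosedForbiddenAt Q q v) : p = q := by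
  obtain ⟨t, x, y, hxy, hleft, hright⟩ := hp.exists_forbSplits hQ hfc
  obtain ⟨t', x', y', hxy', hleft', hright'⟩ := hq.exists_forbSplits hQ hfc
  have eq_pair {s₁ s₂ : Path Q × ℕ} (h₁ : s₁ ∈ Q.forbSplits v) (h₂ : s₂ ∈ Q.forbSplits v)
      (hne : s₁ ≠ s₂) : Q.forbSplits v = {s₁, s₂} :=
    (Set.eq_of_subset_of_ncard_le (Set.pair_subset h₁ h₂)
      (by rw [ncard_forbSplits hQ hfc, Set.ncard_pair hne])
      (Set.finite_of_ncard_pos (by simp [ncard_forbSplits hQ hfc]))).symm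
  have hsplits := (eq_pair hleft hright (by simp [hp.arrows_ne_nil])).symm.trans
    (eq_pair hleft' hright' (by simp [hq.arrows_ne_nil]))
  obtain ⟨rfl, hx, hlen⟩ :
      t = t' ∧ x.length = x'.length ∧ p.arrows.length = q.arrows.length := by
    simp only [Set.pair_eq_pair_iff, Prod.mk.injEq] at hsplits
    grind
  have harrows : p.arrows ++ y = q.arrows ++ y' :=
    (List.append_inj (hxy.symm.trans hxy') hx).2
  exact Path.ext_of_arrows_ne_nil hp.arrows_ne_nil (List.append_inj harrows hlen).1

end IsClosedForbiddenAt

end ClosedPaths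

end BQuiv

/-- Let `(Q, I)` be a gentle bound quiver containing no full cycle
(equivalently, such that the gentle algebra `kQ/I` has finite global dimension).  Then:
(a) every non-trivial forbidden path of `(Q, I)` is a subpath of exactly one forbidden
thread; (b) every vertex of `Q` is the center of exactly two split forbidden threads;
(c) for each vertex `i` of `Q` there is at most one almost-full cycle at `i`, and any
almost-full cycle has length at least `2`. -/
theorem stmt2 {V A : Type} [Fintype V] [Fintype A] (Q : BQuiv V A) (hQ : Q.IsGentle)
    (hfc : ¬ ∃ p : BQuiv.Path Q, IsFullCycle Q p) :
    (∀ l : List A, l ≠ [] → Q.PathChain l → l.Chain' (fun a b => Q.rel a b) →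
      ∃! p : BQuiv.Path Q, IsForbThread Q p ∧ l <:+: p.arrows) ∧
    (∀ v : V,
      Nat.card {x : BQuiv.Path Q × ℕ //
        IsForbThread Q x.1 ∧ x.2 ≤ x.1.arrows.length ∧ x.1.vertexAt x.2 = v} = 2) ∧
    (∀ i : V, ∀ p q : BQuiv.Path Q,
      IsAlmostFullCycleAt Q p i → IsAlmostFullCycleAt Q q i → p = q) ∧
    (∀ i : V, ∀ p : BQuiv.Path Q, IsAlmostFullCycleAt Q p i → 2 ≤ p.arrows.length) := by
  refine ⟨fun l hne _ hl => existsUnique_isForbThread_of_isChain hQ hfc hne hl,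
    ncard_forbSplits hQ hfc, fun i p q hp hq => ?_, fun i p hp => ?_⟩
  · exact hp.isClosedForbiddenAt.unique hQ hfc hq.isClosedForbiddenAt
  · exact hp.isClosedForbiddenAt.two_le_length hQ hfc
end

section
/- Let (Q,I) be a gentle bound quiver with associated marked ribbon graph (G,≤) = △(Q,I). Then the pairs of string functions of (Q,I) are in bijection with the directions of G, i.e., the functions σ : H(G) → {±1} satisfying σ(ιh) = −σ(h) for all half-edges h. In particular, (Q,I) admits exactly 2^{|Q0|} pairs of string functions. -/
set_option autoImplicit false

attribute [local instance] Classical.propDecidable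

namespace BQuiv

variable {V A : Type}

/-- The type of permitted threads of `(Q, I)`: the vertices of the associated marked
ribbon graph `△(Q, I)`. -/
def PThread (Q : BQuiv V A) : Type := {p : Path Q // IsPermThread Q p}

/-- The type of split permitted threads of `(Q, I)`: a permitted thread together with a
cut position.  These are the half-edges of the associated marked ribbon graph
`△(Q, I)`. -/
def PSplit (Q : BQuiv V A) : Type := {x : PThread Q × ℕ // x.2 ≤ x.1.1.arrows.length}

/-- The thread (vertex of `△(Q, I)`) over which a split permitted thread lies. -/
def PSplit.thread {Q : BQuiv V A} (x : PSplit Q) : PThread Q := x.1.1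

/-- The cut position of a split permitted thread. -/
def PSplit.idx {Q : BQuiv V A} (x : PSplit Q) : ℕ := x.1.2

/-- The center of a split permitted thread `(η″, η′)`: the vertex `s(η″) = t(η′)`.
The centers realize the bijection between the edges of `△(Q, I)` and the vertices
of `Q`. -/
def PSplit.center {Q : BQuiv V A} (x : PSplit Q) : V :=
  x.1.1.1.vertexAt x.1.2

end BQuiv

namespace BQuiv

variable {V A : Type}

/-- A pair of (Butler–Ringel) string functions for `(Q, I)`, with `Bool` standing for
`{±1}`. -/
def IsStringPair (Q : BQuiv V A) (S T : A → Bool) : Prop :=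
  (∀ a b, a ≠ b → Q.src a = Q.src b → S a ≠ S b) ∧
  (∀ a b, a ≠ b → Q.tgt a = Q.tgt b → T a ≠ T b) ∧
  (∀ a b, Q.tgt a = Q.src b → (Q.rel b a ↔ T a = S b))

end BQuiv

open BQuiv

/-!
Attach to each vertex the initial and terminal halves of the arrows incident with it. Call two
halves at a vertex joined if they are equal or face each other in a permitted path of length two.
The gentle conditions say precisely that this is an equivalence relation with at most two classes
at each vertex, and a pair of string functions is a choice of signs, constant on classes and
different on different classes. A direction is likewise a choice of signs on the half-edges of
`△(Q, I)` separating the two half-edges with a given center. Each half-arrow borders exactly one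
half-edge, with center the vertex at which it is attached, and two half-arrows border the same
half-edge iff they are joined; trivial threads supply the half-edges bordered by no half-arrow.
Sign choices of either kind are determined by one free sign at each vertex, so restriction along
this map is a bijection, and there are `2 ^ |Q₀|` of them.
-/

theorem eq_or_eq_or_eq_of_encard_le_two {α : Type*} {s : Set α} (hs : s.encard ≤ 2) {a b c : α}
    (ha : a ∈ s) (hb : b ∈ s) (hc : c ∈ s) : a = b ∨ a = c ∨ b = c := by
  obtain ⟨hfin, hcard⟩ := Set.encard_le_coe_iff_finite_ncard_le.1 hs
  by_contra! h
  exact absurd ((Set.two_lt_ncard_iff hfin).2 ⟨a, b, c, ha, hb, hc, h⟩) hcard.not_gt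

section Signing

variable {X Y V : Type*} {q : Y → V} {r : Y → Y → Prop}

/-- A sign function is a signing of the relation `r` over `q` if, on every fibre of `q`, two
elements have equal signs exactly when they are related by `r`. -/
def IsSigning (q : Y → V) (r : Y → Y → Prop) (σ : Y → Bool) : Prop :=
  ∀ x y, q x = q y → (σ x = σ y ↔ r x y)

/-- On every fibre of `q`, the relation `r` is an equivalence relation with at most two classes.
The single condition says that `r x y` holds iff `x` and `y` are on the same side of every `z`;
reflexivity, symmetry and transitivity follow from it. -/
def AtMostTwoClasses (q : Y → V) (r : Y → Y → Prop) : Prop :=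
  ∀ x y z, q x = q y → q y = q z → (r x y ↔ (r x z ↔ r y z))

theorem AtMostTwoClasses.refl (hr : AtMostTwoClasses q r) (x : Y) : r x x :=
  (hr x x x rfl rfl).2 Iff.rfl

theorem bool_eq_iff_eq_iff_eq (a b c : Bool) : a = b ↔ (a = c ↔ b = c) := by
  decide +revert

theorem IsSigning.ext_of_comp {φ : X → Y} (hφ : ∀ y, ∃ x, q (φ x) = q y) {σ τ : Y → Bool}
    (hσ : IsSigning q r σ) (hτ : IsSigning q r τ) (h : σ ∘ φ = τ ∘ φ) : σ = τ := by
  funext y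
  obtain ⟨x, hx⟩ := hφ y
  have hstx : σ (φ x) = τ (φ x) := congrFun h x
  have hsame : σ y = σ (φ x) ↔ τ y = τ (φ x) :=
    (hσ y (φ x) hx.symm).trans (hτ y (φ x) hx.symm).symm
  rw [hstx] at hsame
  exact (bool_eq_iff_eq_iff_eq _ _ _).2 hsame

theorem AtMostTwoClasses.exists_isSigning_comp_eq (hr : AtMostTwoClasses q r) {φ : X → Y}
    (hφ : ∀ y, ∃ x, q (φ x) = q y) {s : X → Bool}
    (hs : IsSigning (q ∘ φ) (Function.onFun r φ) s) : ∃ σ, IsSigning q r σ ∧ σ ∘ φ = s := by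
  choose c hc using hφ
  let σ : Y → Bool := fun y => decide (s (c y) = true ↔ r y (φ (c y)))
  have hσc (y : Y) : σ y = s (c y) ↔ r y (φ (c y)) := by
    cases h : s (c y) <;> simp [σ, h]
  have hσ (y : Y) (x : X) (hx : q y = q (φ x)) : σ y = s x ↔ r y (φ x) := by
    have hcx : s x = s (c y) ↔ r (φ x) (φ (c y)) := hs x (c y) (hx.symm.trans (hc y).symm)
    rw [bool_eq_iff_eq_iff_eq _ _ (s (c y)), hσc, hcx]
    exact (hr y (φ x) (φ (c y)) hx (hx.symm.trans (hc y).symm)).symm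
  refine ⟨σ, fun y y' hy => ?_, funext fun x => (hσ (φ x) x rfl).2 (hr.refl _)⟩
  rw [bool_eq_iff_eq_iff_eq _ _ (s (c y')), hσc y', hσ y _ (hy.trans (hc y').symm)]
  exact (hr y y' (φ (c y')) hy (hc y').symm).symm

/-- Signings of a relation with at most two classes on each fibre restrict bijectively along any
map that meets every nonempty fibre. -/
noncomputable def AtMostTwoClasses.signingEquiv (hr : AtMostTwoClasses q r) {φ : X → Y}
    (hφ : ∀ y, ∃ x, q (φ x) = q y) :
    {σ // IsSigning q r σ} ≃ {s // IsSigning (q ∘ φ) (Function.onFun r φ) s} :=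
  Equiv.ofBijective (fun σ => ⟨σ.1 ∘ φ, fun x y => σ.2 (φ x) (φ y)⟩)
    ⟨fun σ τ h => Subtype.ext (σ.2.ext_of_comp hφ τ.2 (congrArg Subtype.val h)), fun s =>
      let ⟨σ, hσ, h⟩ := hr.exists_isSigning_comp_eq hφ s.2
      ⟨⟨σ, hσ⟩, Subtype.ext h⟩⟩

/-- A signing is determined by its arbitrary value at one chosen point of each nonempty fibre. -/
noncomputable def AtMostTwoClasses.signingEquivRange (hr : AtMostTwoClasses q r) :
    {σ // IsSigning q r σ} ≃ (Set.range q → Bool) :=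
  let base : Set.range q → Y := Set.rangeSplitting q
  have hbase (v : Set.range q) : q (base v) = v := Set.apply_rangeSplitting q v
  have hsigning (s : Set.range q → Bool) : IsSigning (q ∘ base) (Function.onFun r base) s := by
    intro v w hvw
    obtain rfl : v = w := Subtype.ext ((hbase v).symm.trans (hvw.trans (hbase w)))
    exact iff_of_true rfl (hr.refl _)
  (hr.signingEquiv fun y => ⟨⟨q y, y, rfl⟩, hbase _⟩).trans (Equiv.subtypeUnivEquiv hsigning)

end Signing

section MaximalChain

variable {α : Type*} {r : α → α → Prop} {l l' : List α} {i j : ℕ} {a b : α}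

/-- An `r`-chain that cannot be prolonged at either end. The empty chain counts as maximal. -/
structure IsMaximalChain_s3 (r : α → α → Prop) (l : List α) : Prop where
  isChain : l.IsChain r
  head_maximal : ∀ b ∈ l.head?, ∀ a, ¬ r a b
  last_maximal : ∀ a ∈ l.getLast?, ∀ b, ¬ r a b

theorem exists_isMaximalChain_mem (hbdd : ∃ m, ∀ l : List α, l.IsChain r → l.length ≤ m) (a : α) :
    ∃ l, IsMaximalChain_s3 r l ∧ a ∈ l := by
  obtain ⟨m, hm⟩ := hbdd
  let lengths : Set ℕ := List.length '' {l | l.IsChain r ∧ a ∈ l}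
  have hne : lengths.Nonempty :=
    ⟨1, [a], ⟨List.isChain_singleton a, List.mem_singleton_self a⟩, rfl⟩
  have hbdd : BddAbove lengths := ⟨m, by rintro _ ⟨l, ⟨hl, -⟩, rfl⟩; exact hm l hl⟩
  obtain ⟨l, ⟨hl, hal⟩, hlen⟩ := Nat.sSup_mem hne hbdd
  have hmax (l' : List α) (hl' : l'.IsChain r) (hal' : a ∈ l') : l'.length ≤ l.length :=
    hlen ▸ le_csSup hbdd ⟨l', ⟨hl', hal'⟩, rfl⟩
  refine ⟨l, ⟨hl, fun b hb c hcb => ?_, fun b hb c hbc => ?_⟩, hal⟩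
  · have hchain : (c :: l).IsChain r :=
      List.isChain_cons.2 ⟨fun y hy => Option.mem_unique hb hy ▸ hcb, hl⟩
    simpa using hmax (c :: l) hchain (List.mem_cons_of_mem c hal)
  · have hchain : (l ++ [c]).IsChain r := List.isChain_append.2
      ⟨hl, List.isChain_singleton c, fun x hx y hy =>
        Option.mem_unique hb hx ▸ Option.some.inj hy ▸ hbc⟩
    simpa using hmax (l ++ [c]) hchain (List.mem_append_left _ hal)

namespace IsMaximalChain_s3

theorem getElem?_succ_eq_some_iff (hr : Relator.RightUnique r) (hl : IsMaximalChain_s3 r l)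
    (ha : l[i]? = some a) : l[i + 1]? = some b ↔ r a b := by
  obtain ⟨hi, rfl⟩ := List.getElem?_eq_some_iff.1 ha
  have hstep (hi' : i + 1 < l.length) : r l[i] l[i + 1] := hl.isChain.getElem i hi'
  refine ⟨fun hb => ?_, fun hab => ?_⟩
  · obtain ⟨hi', rfl⟩ := List.getElem?_eq_some_iff.1 hb
    exact hstep hi'
  · by_cases hi' : i + 1 < l.length
    · rw [List.getElem?_eq_getElem hi', hr (hstep hi') hab]
    · have hlast : l.getLast? = some l[i] := by grind
      exact absurd hab (hl.last_maximal _ hlast b)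

theorem exists_getElem?_eq_some_of_rel (hr : Relator.LeftUnique r) (hl : IsMaximalChain_s3 r l)
    (hb : l[j]? = some b) (hab : r a b) : ∃ i, j = i + 1 ∧ l[i]? = some a := by
  cases j with
  | zero => exact absurd hab (hl.head_maximal b (List.head?_eq_getElem?.trans hb) a)
  | succ i =>
    obtain ⟨hi, rfl⟩ := List.getElem?_eq_some_iff.1 hb
    refine ⟨i, rfl, ?_⟩
    rw [List.getElem?_eq_getElem (Nat.lt_of_succ_lt hi), hr (hl.isChain.getElem i hi) hab]

theorem eq_of_getElem?_zero_eq (hr : Relator.RightUnique r) (hl : IsMaximalChain_s3 r l)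
    (hl' : IsMaximalChain_s3 r l') (h : l[0]? = l'[0]?) : l = l' := by
  refine List.ext_getElem? fun i => ?_
  induction i with
  | zero => exact h
  | succ i ih =>
    rcases ha : l[i]? with _ | a
    · grind
    · ext b
      exact (hl.getElem?_succ_eq_some_iff hr ha).trans
        (hl'.getElem?_succ_eq_some_iff hr (ih ▸ ha)).symm

theorem eq_and_eq_of_getElem? (hr : Relator.BiUnique r) (hl : IsMaximalChain_s3 r l)
    (hl' : IsMaximalChain_s3 r l') (ha : l[i]? = some a) (ha' : l'[j]? = some a) :
    i = j ∧ l = l' := by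
  induction i generalizing j a with
  | zero =>
    cases j with
    | zero => exact ⟨rfl, hl.eq_of_getElem?_zero_eq hr.2 hl' (ha.trans ha'.symm)⟩
    | succ j =>
      obtain ⟨hj, rfl⟩ := List.getElem?_eq_some_iff.1 ha'
      obtain ⟨_, ⟨⟩, _⟩ := hl.exists_getElem?_eq_some_of_rel hr.1 ha (hl'.isChain.getElem j hj)
  | succ i ih =>
    obtain ⟨hi, rfl⟩ := List.getElem?_eq_some_iff.1 ha
    obtain ⟨k, rfl, hk⟩ :=
      hl'.exists_getElem?_eq_some_of_rel hr.1 ha' (hl.isChain.getElem i hi)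
    obtain ⟨rfl, rfl⟩ := ih (List.getElem?_eq_getElem _) hk
    exact ⟨rfl, rfl⟩

end IsMaximalChain_s3

end MaximalChain

namespace BQuiv

variable {V A : Type} {Q : BQuiv V A}

/-- Conditions (i)–(iii) of a gentle bound quiver, on a quiver that may be infinite. Conditions (ii)
and (iii) together say that two arrows composable with `b` coincide as soon as both or neither of
them form a relation with `b`. Fibres are counted by `encard` because `Nat.card` is `0` on infinite
ones. -/
structure IsLocallyGentle (Q : BQuiv V A) : Prop where
  out_le : ∀ v, {a | Q.src a = v}.encard ≤ 2
  in_le : ∀ v, {a | Q.tgt a = v}.encard ≤ 2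
  unique_post : ∀ b a a', Q.src a = Q.tgt b → Q.src a' = Q.tgt b →
    (Q.rel a b ↔ Q.rel a' b) → a = a'
  unique_pre : ∀ b c c', Q.src b = Q.tgt c → Q.src b = Q.tgt c' →
    (Q.rel b c ↔ Q.rel b c') → c = c'

theorem IsGentle.isLocallyGentle [Finite A] (hQ : Q.IsGentle) : Q.IsLocallyGentle where
  out_le v := (Set.encard_le_coe_iff_finite_ncard_le).2 ⟨Set.toFinite _, hQ.out_le v⟩
  in_le v := (Set.encard_le_coe_iff_finite_ncard_le).2 ⟨Set.toFinite _, hQ.in_le v⟩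
  unique_post b a a' ha ha' h := by
    by_cases hr : Q.rel a b
    · exact hQ.unique_rel_post b a a' hr (h.1 hr)
    · exact hQ.unique_nonrel_post b a a' ha ha' hr (mt h.2 hr)
  unique_pre b c c' hc hc' h := by
    by_cases hr : Q.rel b c
    · exact hQ.unique_rel_pre b c c' hr (h.1 hr)
    · exact hQ.unique_nonrel_pre b c c' hc hc' hr (mt h.2 hr)

/-- The path `ab` of length two is permitted. -/
def Follows (Q : BQuiv V A) (a b : A) : Prop := Q.src a = Q.tgt b ∧ ¬ Q.rel a b

theorem IsLocallyGentle.biUnique_follows (hQ : Q.IsLocallyGentle) : Relator.BiUnique Q.Follows :=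
  ⟨fun a a' b h h' => hQ.unique_post b a a' h.1 h'.1 (iff_of_false h.2 h'.2),
    fun b c c' h h' => hQ.unique_pre b c c' h.1 h'.1 (iff_of_false h.2 h'.2)⟩

theorem IsGentle.exists_length_le_of_isChain_follows (hQ : Q.IsGentle) :
    ∃ m, ∀ l : List A, l.IsChain Q.Follows → l.length ≤ m := by
  obtain ⟨m, -, hm⟩ := hQ.admissible
  refine ⟨m, fun l hl => le_of_not_gt fun hlt => ?_⟩
  have hlen : (l.take m).length = m := List.length_take_of_le hlt.le
  have hl' : (l.take m).IsChain Q.Follows := hl.take m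
  exact hm _ hlen (hl'.imp fun _ _ h => h.1) (hl'.imp fun _ _ h => h.2)

/-- The vertex at which a half-arrow is attached: `inl a` is the initial half of the arrow `a`
and `inr a` its terminal half. -/
def endpoint (Q : BQuiv V A) : A ⊕ A → V := Sum.elim Q.src Q.tgt

theorem IsGentle.endpoint_surjective (hQ : Q.IsGentle) : Function.Surjective Q.endpoint := by
  intro v
  obtain ⟨a⟩ := hQ.has_arrow
  rcases (hQ.connected v (Q.src a)).cases_head with rfl | ⟨_, ⟨b, ⟨hb, -⟩ | ⟨-, hb⟩⟩, -⟩
  exacts [⟨.inl a, rfl⟩, ⟨.inl b, hb⟩, ⟨.inr b, hb⟩]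

/-- Two half-arrows are joined if they are equal or are the halves facing each other in a permitted
path of length two. Joined half-arrows are those bordering the same split permitted thread. -/
def Joined (Q : BQuiv V A) : A ⊕ A → A ⊕ A → Prop
  | .inl a, .inl b => a = b
  | .inr a, .inr b => a = b
  | .inl a, .inr b => Q.Follows a b
  | .inr b, .inl a => Q.Follows a b

theorem IsLocallyGentle.atMostTwoClasses_joined (hQ : Q.IsLocallyGentle) :
    AtMostTwoClasses Q.endpoint Q.Joined := by
  have hout {a b c : A} (hab : Q.src a = Q.src b) (hbc : Q.src b = Q.src c) :
      a = b ∨ a = c ∨ b = c :=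
    eq_or_eq_or_eq_of_encard_le_two (hQ.out_le (Q.src c)) (hab.trans hbc) hbc rfl
  have hin {a b c : A} (hab : Q.tgt a = Q.tgt b) (hbc : Q.tgt b = Q.tgt c) :
      a = b ∨ a = c ∨ b = c :=
    eq_or_eq_or_eq_of_encard_le_two (hQ.in_le (Q.tgt c)) (hab.trans hbc) hbc rfl
  have hpost := hQ.unique_post
  have hpre := hQ.unique_pre
  rintro (a | a) (b | b) (c | c) hab hbc <;>
    simp only [endpoint, Joined, Follows, Sum.elim_inl, Sum.elim_inr] at hab hbc ⊢ <;> grind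

theorem IsLocallyGentle.card_endpoint_fiber (hQ : Q.IsLocallyGentle) (v : V) :
    Nat.card {g // Q.endpoint g = v} = Q.deg v := by
  have : Finite {a // Q.endpoint (.inl a) = v} := Set.finite_of_encard_le_coe (hQ.out_le v)
  have : Finite {a // Q.endpoint (.inr a) = v} := Set.finite_of_encard_le_coe (hQ.in_le v)
  exact (Nat.card_congr Equiv.subtypeSum).trans Nat.card_sum

/-- The signs of the half-arrows encoded by `(S, T)`: `S a` at the source of `a` and `-T a` at its
target. The minus sign makes the two halves facing each other in a permitted path agree. -/
def signEquiv (A : Type) : (A → Bool) × (A → Bool) ≃ (A ⊕ A → Bool) :=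
  (Equiv.prodCongr (Equiv.refl _) (Equiv.arrowCongr (Equiv.refl A) Equiv.boolNot)).trans
    (Equiv.sumArrowEquivProdArrow A A Bool).symm

theorem rel_iff_eq_iff_not_eq_iff_follows {s t : Bool} {a b : A} (hab : Q.src a = Q.tgt b) :
    (Q.rel a b ↔ t = s) ↔ ((!t) = s ↔ Q.Follows a b) := by
  rw [Follows, and_iff_right hab, Bool.not_eq, ne_eq, not_iff_not, @iff_comm (t = s)]

theorem isStringPair_iff_isSigning {S T : A → Bool} :
    IsStringPair Q S T ↔ IsSigning Q.endpoint Q.Joined (signEquiv A (S, T)) := by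
  constructor
  · rintro ⟨hS, hT, hrel⟩
    have hcross (a b : A) (hab : Q.src a = Q.tgt b) : (!T b) = S a ↔ Q.Follows a b :=
      (rel_iff_eq_iff_not_eq_iff_follows hab).1 (hrel b a hab.symm)
    rintro (a | a) (b | b) hab
    · exact ⟨fun h => by_contra fun hne => hS a b hne hab h, congrArg S⟩
    · exact eq_comm.trans (hcross a b hab)
    · exact hcross b a hab.symm
    · exact ⟨fun h => by_contra fun hne => hT a b hne hab (Bool.not_inj h),
        congrArg fun a => !T a⟩
  · intro h
    exact ⟨fun a b hne hab hS => hne ((h (.inl a) (.inl b) hab).1 hS),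
      fun a b hne hab hT => hne ((h (.inr a) (.inr b) hab).1 (congrArg Bool.not hT)),
      fun a b hab => (rel_iff_eq_iff_not_eq_iff_follows hab.symm).2 (h (.inr a) (.inl b) hab)⟩

/-- Pairs of string functions correspond to signings of the half-arrows for `Joined`. -/
def stringPairEquivSigning (Q : BQuiv V A) :
    {ST : (A → Bool) × (A → Bool) // IsStringPair Q ST.1 ST.2} ≃
      {s // IsSigning Q.endpoint Q.Joined s} :=
  (signEquiv A).subtypeEquiv fun _ => isStringPair_iff_isSigning

theorem Path.ext_of_arrows_eq {p q : Path Q} (hbase : p.base = q.base)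
    (harrows : p.arrows = q.arrows) : p = q := by
  cases p; cases q; congr

theorem Path.base_eq_of_arrows_eq {p q : Path Q} (harrows : p.arrows = q.arrows)
    (hne : p.arrows ≠ []) : p.base = q.base := by
  have hlast : p.arrows.getLast? = some (p.arrows.getLast hne) := List.getLast?_eq_some_getLast hne
  exact (p.base_eq _ hlast).symm.trans (q.base_eq _ (harrows ▸ hlast))

theorem Path.vertexAt_eq (p : Path Q) (n : ℕ) :
    p.vertexAt n = (p.arrows[n]?).elim p.base Q.tgt := by
  rw [vertexAt, List.head?_drop]

theorem Path.isChain_follows_iff_permitted (p : Path Q) :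
    p.arrows.IsChain Q.Follows ↔ p.Permitted :=
  ⟨fun h => h.imp fun _ _ h => h.2, fun h => List.isChain_iff_getElem.2 fun i hi =>
    ⟨p.chain.getElem i hi, h.getElem i hi⟩⟩

theorem Path.isPermThread_iff_isMaximalChain {p : Path Q} (hne : p.arrows ≠ []) :
    IsPermThread Q p ↔ IsMaximalChain_s3 Q.Follows p.arrows := by
  rw [IsPermThread, or_iff_left fun h => hne h.1, ← p.isChain_follows_iff_permitted]
  constructor
  · rintro ⟨-, hchain, hhead, hlast⟩
    exact ⟨hchain, fun b hb a hab => hab.2 (hhead a b hb hab.1),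
      fun a ha b hab => hab.2 (hlast a b ha hab.1)⟩
  · rintro ⟨hchain, hhead, hlast⟩
    exact ⟨hne, hchain, fun a b hb hab => not_not.1 fun hr => hhead b hb a ⟨hab, hr⟩,
      fun a b ha hab => not_not.1 fun hr => hlast a ha b ⟨hab, hr⟩⟩

theorem IsPermThread.isMaximalChain {p : Path Q} (hp : IsPermThread Q p) :
    IsMaximalChain_s3 Q.Follows p.arrows := by
  by_cases hne : p.arrows = []
  · rw [hne]
    exact ⟨List.isChain_nil, by simp, by simp⟩
  · exact (Path.isPermThread_iff_isMaximalChain hne).1 hp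

theorem exists_isPermThread_mem_arrows
    (hbdd : ∃ m, ∀ l : List A, l.IsChain Q.Follows → l.length ≤ m) (a : A) :
    ∃ p : Path Q, IsPermThread Q p ∧ a ∈ p.arrows := by
  obtain ⟨l, hl, hal⟩ := exists_isMaximalChain_mem hbdd a
  have hne : l ≠ [] := List.ne_nil_of_mem hal
  let p : Path Q :=
    { base := Q.src (l.getLast hne)
      arrows := l
      chain := hl.isChain.imp fun _ _ h => h.1
      base_eq := fun b hb => by grind }
  exact ⟨p, (Path.isPermThread_iff_isMaximalChain (p := p) hne).2 hl, hal⟩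

theorem IsPermThread.exists_endpoint_eq_base (hQ : Q.IsLocallyGentle) {p : Path Q}
    (hp : IsPermThread Q p) (hnil : p.arrows = []) : ∃ g, Q.endpoint g = p.base := by
  have hdeg : Q.deg p.base ≠ 0 := by
    rcases hp with ⟨hne, -⟩ | ⟨-, hdeg | ⟨hdeg, -⟩⟩
    · exact absurd hnil hne
    all_goals omega
  rw [← hQ.card_endpoint_fiber] at hdeg
  exact nonempty_subtype.1 (Nat.card_ne_zero.1 hdeg).1

theorem IsPermThread.joined_of_endpoint_eq_base (hQ : Q.IsLocallyGentle) {p : Path Q}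
    (hp : IsPermThread Q p) (hnil : p.arrows = []) {g h : A ⊕ A} (hg : Q.endpoint g = p.base)
    (hh : Q.endpoint h = p.base) : Q.Joined g h := by
  rcases hp with ⟨hne, -⟩ | ⟨-, hdeg | ⟨hdeg, a, b, ha, hb, hab⟩⟩
  · exact absurd hnil hne
  · rw [← hQ.card_endpoint_fiber, Nat.card_eq_one_iff_unique] at hdeg
    obtain rfl : g = h := congrArg Subtype.val (hdeg.1.elim ⟨g, hg⟩ ⟨h, hh⟩)
    exact hQ.atMostTwoClasses_joined.refl g
  · rw [← hQ.card_endpoint_fiber, Nat.card_eq_two_iff' ⟨.inl a, ha⟩] at hdeg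
    have hcases {k : A ⊕ A} (hk : Q.endpoint k = p.base) : k = .inl a ∨ k = .inr b :=
      or_iff_not_imp_left.2 fun hne => congrArg Subtype.val
        (hdeg.unique (y₁ := ⟨k, hk⟩) (y₂ := ⟨.inr b, hb⟩) (Subtype.coe_ne_coe.1 hne)
          (Subtype.coe_ne_coe.1 Sum.inr_ne_inl))
    have hfollows : Q.Follows a b := ⟨ha.trans hb.symm, hab⟩
    rcases hcases hg with rfl | rfl <;> rcases hcases hh with rfl | rfl
    exacts [rfl, hfollows, hfollows, rfl]

namespace PSplit

/-- The arrows of the permitted thread `η″η′` underlying the split permitted thread `(η″, η′)`. -/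
def arrows (z : PSplit Q) : List A := z.thread.1.arrows

/-- The half-arrow `g` borders the cut of the split permitted thread `z = (η″, η′)`: it is the
initial half of the last arrow of `η″` or the terminal half of the first arrow of `η′`. -/
def Borders (z : PSplit Q) : A ⊕ A → Prop
  | .inl a => ∃ i, z.arrows[i]? = some a ∧ z.idx = i + 1
  | .inr b => ∃ i, z.arrows[i]? = some b ∧ z.idx = i

variable {z w x y : PSplit Q} {g h : A ⊕ A}

theorem isMaximalChain (z : PSplit Q) : IsMaximalChain_s3 Q.Follows z.arrows :=
  z.thread.2.isMaximalChain

theorem center_eq (z : PSplit Q) :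
    z.center = (z.arrows[z.idx]?).elim z.thread.1.base Q.tgt :=
  z.thread.1.vertexAt_eq z.idx

theorem center_eq_base (hz : z.arrows = []) : z.center = z.thread.1.base := by
  rw [center_eq, hz, List.getElem?_nil, Option.elim_none]

theorem ext_of_base_eq (hbase : z.thread.1.base = w.thread.1.base) (harrows : z.arrows = w.arrows)
    (hidx : z.idx = w.idx) : z = w :=
  Subtype.ext (Prod.ext (Subtype.ext (Path.ext_of_arrows_eq hbase harrows)) hidx)

theorem eq_of_arrows_eq_nil (hz : z.arrows = []) (hw : w.arrows = []) (h : z.center = w.center) :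
    z = w := by
  have hidx {u : PSplit Q} (hu : u.arrows = []) : u.idx = 0 := by
    have hle : u.idx ≤ u.arrows.length := u.2
    simpa [hu] using hle
  refine ext_of_base_eq ?_ (hz.trans hw.symm) ((hidx hz).trans (hidx hw).symm)
  rw [← center_eq_base hz, h, center_eq_base hw]

theorem eq_of_getElem?_eq (hQ : Q.IsLocallyGentle) {a : A} {i j n : ℕ}
    (hz : z.arrows[i]? = some a) (hzi : z.idx = i + n)
    (hw : w.arrows[j]? = some a) (hwj : w.idx = j + n) : z = w := by
  obtain ⟨rfl, harrows⟩ :=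
    z.isMaximalChain.eq_and_eq_of_getElem? hQ.biUnique_follows w.isMaximalChain hz hw
  have hne : z.arrows ≠ [] := by grind
  exact ext_of_base_eq (Path.base_eq_of_arrows_eq harrows hne) harrows (hzi.trans hwj.symm)

theorem Borders.unique (hQ : Q.IsLocallyGentle) (hz : z.Borders g) (hw : w.Borders g) : z = w :=
  match g, hz, hw with
  | .inl _, ⟨_, hzi, hi⟩, ⟨_, hwj, hj⟩ => eq_of_getElem?_eq hQ hzi hi hwj hj
  | .inr _, ⟨_, hzi, hi⟩, ⟨_, hwj, hj⟩ => eq_of_getElem?_eq hQ (n := 0) hzi hi hwj hj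

theorem exists_borders (hbdd : ∃ m, ∀ l : List A, l.IsChain Q.Follows → l.length ≤ m)
    (g : A ⊕ A) : ∃ z : PSplit Q, z.Borders g := by
  obtain ⟨p, hp, hmem⟩ := exists_isPermThread_mem_arrows hbdd (g.elim id id)
  obtain ⟨i, hi, hpi⟩ := List.mem_iff_getElem.1 hmem
  rcases g with a | b
  · exact ⟨⟨⟨⟨p, hp⟩, i + 1⟩, hi⟩, i, List.getElem?_eq_some_iff.2 ⟨hi, hpi⟩, rfl⟩
  · exact ⟨⟨⟨⟨p, hp⟩, i⟩, hi.le⟩, i, List.getElem?_eq_some_iff.2 ⟨hi, hpi⟩, rfl⟩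

theorem exists_borders_of_arrows_ne_nil (hz : z.arrows ≠ []) : ∃ g, z.Borders g := by
  have hle : z.idx ≤ z.arrows.length := z.2
  rcases hi : z.idx with _ | i
  · exact ⟨.inr (z.arrows.head hz), 0, by grind, hi⟩
  · exact ⟨.inl z.arrows[i], i, List.getElem?_eq_getElem _, hi⟩

theorem Borders.borders_iff_joined (hQ : Q.IsLocallyGentle) (hz : z.Borders g) :
    z.Borders h ↔ Q.Joined g h := by
  obtain ⟨hleft, hright⟩ := hQ.biUnique_follows
  have hz' := hz
  rcases g with a | a <;> rcases h with b | b <;> obtain ⟨i, ha, hi⟩ := hz'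
  · refine ⟨fun ⟨j, hb, hj⟩ => ?_, fun hab => hab ▸ hz⟩
    obtain rfl : i = j := by omega
    exact Option.some.inj (ha.symm.trans hb)
  · refine Iff.trans ⟨?_, fun hb => ⟨i + 1, hb, hi⟩⟩
      (z.isMaximalChain.getElem?_succ_eq_some_iff hright ha)
    rintro ⟨_, hb, rfl⟩
    exact hi ▸ hb
  · constructor
    · rintro ⟨j, hb, hj⟩
      obtain rfl : i = j + 1 := hi.symm.trans hj
      exact (z.isMaximalChain.getElem?_succ_eq_some_iff hright hb).1 ha
    · intro hab
      obtain ⟨j, rfl, hb⟩ := z.isMaximalChain.exists_getElem?_eq_some_of_rel hleft ha hab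
      exact ⟨j, hb, hi⟩
  · refine ⟨fun ⟨j, hb, hj⟩ => ?_, fun hab => hab ▸ hz⟩
    obtain rfl : i = j := by omega
    exact Option.some.inj (ha.symm.trans hb)

theorem Borders.eq_iff_joined (hQ : Q.IsLocallyGentle) (hz : z.Borders g) (hw : w.Borders h) :
    z = w ↔ Q.Joined g h :=
  ⟨fun hzw => (hz.borders_iff_joined hQ).1 (hzw ▸ hw),
    fun hgh => ((hz.borders_iff_joined hQ).2 hgh).unique hQ hw⟩

theorem Borders.center_eq (hQ : Q.IsLocallyGentle) (hz : z.Borders g) :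
    z.center = Q.endpoint g := by
  rcases g with a | b
  · obtain ⟨i, ha, hi⟩ := hz
    rw [PSplit.center_eq, hi]
    rcases hb : z.arrows[i + 1]? with _ | b
    · have hlast : z.arrows.getLast? = some a := by grind
      exact (z.thread.1.base_eq a hlast).symm
    · have hab : Q.Follows a b :=
        (z.isMaximalChain.getElem?_succ_eq_some_iff hQ.biUnique_follows.2 ha).1 hb
      exact hab.1.symm
  · obtain ⟨i, hb, rfl⟩ := hz
    rw [PSplit.center_eq, hb]
    rfl

theorem exists_endpoint_eq_center (hQ : Q.IsLocallyGentle) (z : PSplit Q) :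
    ∃ g, Q.endpoint g = z.center := by
  by_cases hz : z.arrows = []
  · rw [center_eq_base hz]
    exact z.thread.2.exists_endpoint_eq_base hQ hz
  · obtain ⟨g, hg⟩ := exists_borders_of_arrows_ne_nil hz
    exact ⟨g, (hg.center_eq hQ).symm⟩

theorem eq_of_arrows_ne_nil_of_center_eq (hQ : Q.IsLocallyGentle) (hz : z.arrows = [])
    (hx : x.arrows ≠ []) (hy : y.arrows ≠ []) (hxz : x.center = z.center)
    (hyz : y.center = z.center) : x = y := by
  obtain ⟨g, hg⟩ := exists_borders_of_arrows_ne_nil hx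
  obtain ⟨h, hh⟩ := exists_borders_of_arrows_ne_nil hy
  rw [hg.center_eq hQ, center_eq_base hz] at hxz
  rw [hh.center_eq hQ, center_eq_base hz] at hyz
  exact (hg.eq_iff_joined hQ hh).2 (z.thread.2.joined_of_endpoint_eq_base hQ hz hxz hyz)

theorem eq_iff_arrows_eq_nil_iff (hQ : Q.IsLocallyGentle) (hz : z.arrows = [])
    (hxz : x.center = z.center) (hyz : y.center = z.center) :
    x = y ↔ (x.arrows = [] ↔ y.arrows = []) := by
  refine ⟨fun h => by rw [h], fun h => ?_⟩
  by_cases hx : x.arrows = []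
  · exact eq_of_arrows_eq_nil hx (h.1 hx) (hxz.trans hyz.symm)
  · exact eq_of_arrows_ne_nil_of_center_eq hQ hz hx (mt h.2 hx) hxz hyz

theorem atMostTwoClasses_center_eq (hQ : Q.IsLocallyGentle) :
    AtMostTwoClasses (center (Q := Q)) Eq := by
  intro x y z hxy hyz
  by_cases htrivial : ∃ u : PSplit Q, u.arrows = [] ∧ u.center = z.center
  · obtain ⟨u, hu, huz⟩ := htrivial
    have hyu : y.center = u.center := hyz.trans huz.symm
    rw [eq_iff_arrows_eq_nil_iff hQ hu (hxy.trans hyu) hyu,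
      eq_iff_arrows_eq_nil_iff hQ hu (hxy.trans hyu) huz.symm,
      eq_iff_arrows_eq_nil_iff hQ hu hyu huz.symm]
    tauto
  · push Not at htrivial
    obtain ⟨f, hf⟩ := exists_borders_of_arrows_ne_nil fun h => htrivial x h (hxy.trans hyz)
    obtain ⟨g, hg⟩ := exists_borders_of_arrows_ne_nil fun h => htrivial y h hyz
    obtain ⟨h, hh⟩ := exists_borders_of_arrows_ne_nil fun h => htrivial z h rfl
    rw [hf.eq_iff_joined hQ hg, hf.eq_iff_joined hQ hh, hg.eq_iff_joined hQ hh]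
    rw [hf.center_eq hQ, hg.center_eq hQ] at hxy
    rw [hg.center_eq hQ, hh.center_eq hQ] at hyz
    exact hQ.atMostTwoClasses_joined f g h hxy hyz

theorem isSigning_center_iff {σ : PSplit Q → Bool} :
    IsSigning center Eq σ ↔ ∀ x y, x ≠ y → x.center = y.center → σ x = !σ y := by
  refine forall₂_congr fun x y => ?_
  rw [Bool.eq_not]
  grind

end PSplit

/-- Directions correspond to signings of the half-arrows: a half-arrow receives the sign of the
half-edge it borders. -/
noncomputable def directionEquivSigning (hQ : Q.IsLocallyGentle)
    (hbdd : ∃ m, ∀ l : List A, l.IsChain Q.Follows → l.length ≤ m) :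
    {σ : PSplit Q → Bool // ∀ x y, x ≠ y → x.center = y.center → σ x = !σ y} ≃
      {s // IsSigning Q.endpoint Q.Joined s} :=
  let halfEdge (g : A ⊕ A) : PSplit Q := (PSplit.exists_borders hbdd g).choose
  have hborders (g : A ⊕ A) : (halfEdge g).Borders g := (PSplit.exists_borders hbdd g).choose_spec
  have hcenter : PSplit.center ∘ halfEdge = Q.endpoint :=
    funext fun g => (hborders g).center_eq hQ
  have hjoined : Function.onFun Eq halfEdge = Q.Joined :=
    funext₂ fun g h => propext ((hborders g).eq_iff_joined hQ (hborders h))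
  have hmeets (z : PSplit Q) : ∃ g, (halfEdge g).center = z.center :=
    (PSplit.exists_endpoint_eq_center hQ z).imp fun g hg => (congrFun hcenter g).trans hg
  (Equiv.subtypeEquivRight fun _ => PSplit.isSigning_center_iff).symm.trans <|
    ((PSplit.atMostTwoClasses_center_eq hQ).signingEquiv hmeets).trans <|
      Equiv.subtypeEquivRight fun s => by rw [hcenter, hjoined]

end BQuiv

theorem stmt3_general {V A : Type} {Q : BQuiv V A} (hQ : Q.IsLocallyGentle)
    (hbdd : ∃ m, ∀ l : List A, l.IsChain Q.Follows → l.length ≤ m) :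
    Nonempty ({ST : (A → Bool) × (A → Bool) // IsStringPair Q ST.1 ST.2} ≃
      {σ : PSplit Q → Bool //
        ∀ x y : PSplit Q, x ≠ y → x.center = y.center → σ x = !σ y}) ∧
    Nonempty ({ST : (A → Bool) × (A → Bool) // IsStringPair Q ST.1 ST.2} ≃
      (Set.range Q.endpoint → Bool)) :=
  ⟨⟨Q.stringPairEquivSigning.trans (directionEquivSigning hQ hbdd).symm⟩,
    ⟨Q.stringPairEquivSigning.trans hQ.atMostTwoClasses_joined.signingEquivRange⟩⟩

/-- Let `(Q, I)` be a gentle bound quiver with associated marked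
ribbon graph `(G, ≤) = △(Q, I)`.  Then the pairs of string functions of `(Q, I)` are in
bijection with the directions of `G`, i.e. the functions `σ : H(G) → {±1}` with
`σ(ιh) = -σ(h)` for all half-edges `h`.  (The half-edges of `G` are the split permitted
threads, and `ι` exchanges the two split permitted threads with a common center, so a
direction is a function assigning opposite signs to distinct split permitted threads
with the same center.)  In particular, `(Q, I)` admits exactly `2 ^ |Q₀|` pairs of
string functions. -/
theorem stmt3 {V A : Type} [Fintype V] [Fintype A] (Q : BQuiv V A) (hQ : Q.IsGentle) :
    Nonempty ({ST : (A → Bool) × (A → Bool) // IsStringPair Q ST.1 ST.2} ≃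
      {σ : PSplit Q → Bool //
        ∀ x y : PSplit Q, x ≠ y → x.center = y.center → σ x = !σ y}) ∧
    Nat.card {ST : (A → Bool) × (A → Bool) // IsStringPair Q ST.1 ST.2} =
      2 ^ Fintype.card V := by
  obtain ⟨hdirections, ⟨e⟩⟩ :=
    stmt3_general hQ.isLocallyGentle hQ.exists_length_le_of_isChain_follows
  refine ⟨hdirections, ?_⟩
  rw [Nat.card_congr e, hQ.endpoint_surjective.range_eq]
  simp
end

section
/- Let (G,≤) be a marked ribbon graph. Then the bound quiver ∇(G,≤) is a gentle bound quiver. Moreover, for each vertex α of G with chain of half-edges h^α_0 > h^α_1 > ⋯ > h^α_{ℓ^α}, the path η^α := (h^α_0,h^α_1)(h^α_1,h^α_2)⋯(h^α_{ℓ^α−1},h^α_{ℓ^α}) of ∇(G,≤) (taken to be the trivial path at the edge {h^α_0, ιh^α_0} when ℓ^α = 0) is a permitted thread of ∇(G,≤), and every permitted thread of ∇(G,≤) equals η^α for some vertex α of G. -/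
set_option autoImplicit false

attribute [local instance] Classical.propDecidable

/-- A marked ribbon graph `(G, ≤)`: a finite graph given by half-edges (a set `H` of
half-edges with an incidence map `z : H → V` and a fixed-point-free involution `ι`
whose orbits are the edges), together with a partial order `≤` on `H` in which two
half-edges are comparable exactly when they are incident to the same vertex; the graph
is required to be connected, without isolated vertices (`z` surjective) and with a
vertex of degree at least two. -/
structure MRG (V H : Type) where
  z : H → V
  invh : H → H
  inv_inv : ∀ h, invh (invh h) = h
  inv_ne : ∀ h, invh h ≠ h
  z_surj : Function.Surjective z
  le : H → H → Prop
  le_refl : ∀ h, le h h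
  le_trans : ∀ {a b c}, le a b → le b c → le a c
  le_antisymm : ∀ {a b}, le a b → le b a → a = b
  comp_iff : ∀ a b, (le a b ∨ le b a) ↔ z a = z b
  connected : ∀ u v : V,
    Relation.ReflTransGen (fun x y => ∃ h, z h = x ∧ z (invh h) = y) u v
  thick : ∃ h h' : H, h ≠ h' ∧ z h = z h'

namespace MRG

variable {V H : Type}

/-- The type of edges of the graph: orbits of the involution. -/
def E (G : MRG V H) : Type := Quot (fun a b : H => b = G.invh a)

/-- The edge containing a given half-edge. -/
def edge (G : MRG V H) (h : H) : G.E := Quot.mk _ h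

/-- The strict order on half-edges. -/
def lt (G : MRG V H) (a b : H) : Prop := G.le a b ∧ a ≠ b

/-- `b` covers `a`: `a` is a direct predecessor of `b` (equivalently `b` is the direct
successor of `a`) with respect to `≤`. -/
def Cov (G : MRG V H) (a b : H) : Prop :=
  G.lt a b ∧ ∀ c, G.lt a c → G.lt c b → False

end MRG

namespace MRG

variable {V H : Type}

/-- The type of arrows of the bound quiver `∇(G, ≤)`: pairs `(h′, h)` of half-edges
with `h` the direct predecessor of `h′` with respect to `≤`. -/
def NArrow (G : MRG V H) : Type := {p : H × H // G.Cov p.2 p.1}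

/-- The bound quiver `∇(G, ≤)` of a marked ribbon graph: its vertices are the edges of
`G`, its arrows the pairs `(h′, h)` with `h` the direct predecessor of `h′`, with
source `{h, ιh}` and target `{h′, ιh′}`, and its relations all length-two paths
`(h′₂, h₂)(h′₁, h₁)` with `h′₁ = ι h₂`. -/
def nabla (G : MRG V H) : BQuiv G.E G.NArrow where
  src p := G.edge p.1.2
  tgt p := G.edge p.1.1
  rel a b := b.1.1 = G.invh a.1.2

end MRG

namespace MRG

variable {V H : Type}

/-- `p` is the path `η^α` of `∇(G, ≤)` associated with the vertex `α` of `G`: if the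
half-edges at `α` form the chain `h^α_0 > h^α_1 > ⋯ > h^α_{ℓ^α}`, then `η^α` is the
path `(h^α_0, h^α_1)(h^α_1, h^α_2)⋯(h^α_{ℓ^α - 1}, h^α_{ℓ^α})` — i.e. the path without
repeated arrows consisting of all arrows of `∇(G, ≤)` lying over `α`, consecutive
arrows sharing a half-edge — taken to be the trivial path at the edge
`{h^α_0, ι h^α_0}` when `ℓ^α = 0`. -/
def IsEtaOf (G : MRG V H) (α : V) (p : BQuiv.Path G.nabla) : Prop :=
  (∀ a : G.NArrow, a ∈ p.arrows ↔ G.z a.1.1 = α) ∧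
  p.arrows.Chain' (fun a b => a.1.2 = b.1.1) ∧
  p.arrows.Nodup ∧
  (p.arrows = [] → ∃ h, G.z h = α ∧ p.base = G.edge h)

end MRG

open MRG BQuiv

/-!
Two half-edges on the same edge are equal or swapped by the involution, so a composable pair of
arrows is a non-relation exactly when the two arrows share a half-edge. Permitted paths are thus the
same as strands running down the chain of half-edges at a single vertex, and a nontrivial one is
maximal when it runs from the first half-edge of its vertex to the last one, that is, when it is
the path `η` of that vertex.

A half-edge is the source of one arrow unless it is first, and the target of one arrow unless it is
last. The degree of the edge `{h, ιh}` therefore counts how many of the four statements that `h` or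
`ιh` is first or last fail. Connectedness excludes degree zero, so the conditions on trivial
permitted threads say exactly that `h` or `ιh` is both first and last, hence alone at its vertex.
-/

namespace BQuiv

variable {V A : Type} {Q : BQuiv V A}

/-- Adjacency of vertices in the underlying undirected graph of a quiver. -/
def Adj (Q : BQuiv V A) (x y : V) : Prop :=
  ∃ a, (Q.src a = x ∧ Q.tgt a = y) ∨ (Q.src a = y ∧ Q.tgt a = x)

instance : Std.Symm Q.Adj :=
  ⟨fun _ _ => Exists.imp fun _ => Or.symm⟩

theorem deg_ne_zero_of_connected [Finite A] [Nonempty A]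
    (hconn : ∀ u v, Relation.ReflTransGen Q.Adj u v) (v : V) : Q.deg v ≠ 0 := by
  have b := Classical.arbitrary A
  obtain ⟨a, ha⟩ : ∃ a, Q.src a = v ∨ Q.tgt a = v := by
    rcases (hconn v (Q.src b)).cases_head with rfl | ⟨_, ⟨a, ha | ha⟩, _⟩
    · exact ⟨b, Or.inl rfl⟩
    · exact ⟨a, Or.inl ha.1⟩
    · exact ⟨a, Or.inr ha.2⟩
  rw [deg, Ne, Nat.add_eq_zero_iff, not_and_or]
  exact ha.imp (fun h => (Finite.card_pos_iff.2 ⟨⟨a, h⟩⟩).ne')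
    (fun h => (Finite.card_pos_iff.2 ⟨⟨a, h⟩⟩).ne')

theorem PathChain.exists_path {l : List A} (hl : Q.PathChain l) (hne : l ≠ []) :
    ∃ p : Path Q, p.arrows = l := by
  refine ⟨⟨Q.src (l.getLast hne), l, hl, fun a ha => ?_⟩, rfl⟩
  rw [List.getLast?_eq_some_getLast hne, Option.some_inj] at ha
  rw [ha]

end BQuiv

namespace MRG

variable {V H : Type} {G : MRG V H}

section Order

/-- The order `≤` of a marked ribbon graph as a `PartialOrder` on half-edges, giving access to the
order theory of covers and finite posets. -/
abbrev partialOrder (G : MRG V H) : PartialOrder H where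
  le := G.le
  le_refl := G.le_refl
  le_trans _ _ _ := G.le_trans
  le_antisymm _ _ := G.le_antisymm

theorem lt_iff_lt {a b : H} : G.lt a b ↔ G.partialOrder.lt a b :=
  (@lt_iff_le_and_ne H G.partialOrder a b).symm

theorem cov_iff_covBy {a b : H} : G.Cov a b ↔ @CovBy H G.partialOrder.toLT a b := by
  simp only [Cov, CovBy, lt_iff_lt, imp_false]

theorem z_eq_of_le {a b : H} (h : G.le a b) : G.z a = G.z b :=
  (G.comp_iff a b).1 (Or.inl h)

theorem lt.trans_le {a b c : H} (hab : G.lt a b) (hbc : G.le b c) : G.lt a c :=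
  ⟨G.le_trans hab.1 hbc, by rintro rfl; exact hab.2 (G.le_antisymm hab.1 hbc)⟩

theorem lt.trans {a b c : H} (hab : G.lt a b) (hbc : G.lt b c) : G.lt a c :=
  hab.trans_le hbc.1

theorem lt_of_not_le {a b : H} (hz : G.z a = G.z b) (h : ¬ G.le b a) : G.lt a b :=
  ⟨((G.comp_iff a b).2 hz).resolve_right h, by rintro rfl; exact h (G.le_refl a)⟩

theorem Cov.z_eq {a b : H} (h : G.Cov a b) : G.z a = G.z b :=
  z_eq_of_le h.1.1

theorem Cov.le_of_lt_left {a b c : H} (h : G.Cov a b) (hac : G.lt a c) : G.le b c := by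
  by_contra hbc
  exact h.2 c hac (lt_of_not_le ((z_eq_of_le hac.1).symm.trans h.z_eq) hbc)

theorem Cov.le_of_lt_right {a b c : H} (h : G.Cov a b) (hcb : G.lt c b) : G.le c a := by
  by_contra hca
  exact h.2 c (lt_of_not_le (h.z_eq.trans (z_eq_of_le hcb.1).symm) hca) hcb

theorem Cov.unique_left {a b c : H} (hb : G.Cov b a) (hc : G.Cov c a) : b = c :=
  G.le_antisymm (hc.le_of_lt_right hb.1) (hb.le_of_lt_right hc.1)

theorem Cov.unique_right {a b c : H} (hb : G.Cov a b) (hc : G.Cov a c) : b = c :=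
  G.le_antisymm (hb.le_of_lt_left hc.1) (hc.le_of_lt_left hb.1)

theorem lt.exists_cov_left [Finite H] {a b : H} (h : G.lt a b) : ∃ c, G.Cov a c := by
  let := G.partialOrder
  obtain ⟨c, hc, -⟩ := exists_covBy_le_of_lt (lt_iff_lt.1 h)
  exact ⟨c, cov_iff_covBy.2 hc⟩

theorem lt.exists_cov_right [Finite H] {a b : H} (h : G.lt a b) : ∃ c, G.Cov c b := by
  let := G.partialOrder
  obtain ⟨c, -, hc⟩ := exists_le_covBy_of_lt (lt_iff_lt.1 h)
  exact ⟨c, cov_iff_covBy.2 hc⟩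

end Order

section Arrows

theorem NArrow.ext_fst {a b : G.NArrow} (h : a.1.1 = b.1.1) : a = b :=
  Subtype.ext (Prod.ext h (Cov.unique_left (h ▸ a.2) b.2))

theorem NArrow.ext_snd {a b : G.NArrow} (h : a.1.2 = b.1.2) : a = b :=
  Subtype.ext (Prod.ext (Cov.unique_right (h ▸ a.2) b.2) h)

theorem NArrow.eq_or_fst_le_snd {a b : G.NArrow} (h : G.le a.1.1 b.1.1) :
    a = b ∨ G.le a.1.1 b.1.2 :=
  or_iff_not_imp_left.2 fun hab => b.2.le_of_lt_right ⟨h, fun heq => hab (NArrow.ext_fst heq)⟩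

instance [Finite H] : Finite G.NArrow :=
  inferInstanceAs (Finite {p : H × H // G.Cov p.2 p.1})

instance [Finite H] : Nonempty G.NArrow := by
  obtain ⟨h, k, hne, hz⟩ := G.thick
  rcases (G.comp_iff h k).2 hz with hle | hle
  · obtain ⟨c, hc⟩ := lt.exists_cov_left ⟨hle, hne⟩
    exact ⟨(c, h), hc⟩
  · obtain ⟨c, hc⟩ := lt.exists_cov_left ⟨hle, hne.symm⟩
    exact ⟨(c, k), hc⟩

/-- `h` is the first half-edge `h^α_0`, i.e. the greatest one, at its vertex `α`. -/
def IsFirst (G : MRG V H) (h : H) : Prop :=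
  ∀ k, G.z k = G.z h → G.le k h

/-- `h` is the last half-edge `h^α_{ℓ^α}`, i.e. the least one, at its vertex `α`. -/
def IsLast (G : MRG V H) (h : H) : Prop :=
  ∀ k, G.z k = G.z h → G.le h k

theorem exists_isFirst [Finite H] (G : MRG V H) (α : V) : ∃ h, G.z h = α ∧ G.IsFirst h := by
  let := G.partialOrder
  obtain ⟨h, hz, hmax⟩ := (Set.toFinite {h | G.z h = α}).exists_maximal (G.z_surj α)
  exact ⟨h, hz, fun k hk =>
    ((G.comp_iff k h).2 hk).elim id fun hle => hmax (hk.trans hz) hle⟩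

theorem IsFirst.snd_ne {h : H} (hh : G.IsFirst h) (a : G.NArrow) : a.1.2 ≠ h := by
  rintro rfl
  exact (a.2.1.trans_le (hh _ a.2.z_eq.symm)).2 rfl

theorem IsLast.fst_ne {h : H} (hh : G.IsLast h) (a : G.NArrow) : a.1.1 ≠ h := by
  rintro rfl
  exact (a.2.1.trans_le (hh _ a.2.z_eq)).2 rfl

theorem isFirst_iff_forall_snd_ne [Finite H] {h : H} :
    G.IsFirst h ↔ ∀ a : G.NArrow, a.1.2 ≠ h := by
  refine ⟨IsFirst.snd_ne, fun hh k hz => ?_⟩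
  by_contra hk
  obtain ⟨c, hc⟩ := (lt_of_not_le hz.symm hk).exists_cov_left
  exact hh ⟨(c, h), hc⟩ rfl

theorem isLast_iff_forall_fst_ne [Finite H] {h : H} :
    G.IsLast h ↔ ∀ a : G.NArrow, a.1.1 ≠ h := by
  refine ⟨IsLast.fst_ne, fun hh k hz => ?_⟩
  by_contra hk
  obtain ⟨c, hc⟩ := (lt_of_not_le hz hk).exists_cov_right
  exact hh ⟨(h, c), hc⟩ rfl

end Arrows

section Edges

theorem edge_invh (h : H) : G.edge (G.invh h) = G.edge h :=
  (Quot.sound (r := fun a b => b = G.invh a) rfl).symm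

theorem invh_involutive (G : MRG V H) : Function.Involutive G.invh :=
  G.inv_inv

theorem edge_eq_edge_iff {a b : H} : G.edge a = G.edge b ↔ a = b ∨ a = G.invh b := by
  refine ⟨fun h => ?_, ?_⟩
  · let halves : G.E → Sym2 H :=
      Quot.lift (fun h => s(h, G.invh h)) (by rintro a _ rfl; rw [G.inv_inv, Sym2.eq_swap])
    have hab : s(a, G.invh a) = s(b, G.invh b) := congrArg halves h
    exact (Sym2.eq_iff.1 hab).imp And.left And.left
  · rintro (rfl | rfl)
    · rfl
    · exact edge_invh b

theorem exists_edge_eq (e : G.E) : ∃ h, G.edge h = e :=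
  Quot.exists_rep e

theorem card_edge_eq {A : Type*} [Finite A] (f : A → H) (h : H) :
    Nat.card {a // G.edge (f a) = G.edge h} =
      Nat.card {a // f a = h} + Nat.card {a // f a = G.invh h} := by
  have hdisj : Disjoint (fun a => f a = h) (fun a => f a = G.invh h) :=
    Pi.disjoint_iff.2 fun a => Prop.disjoint_iff.2 fun ⟨h₁, h₂⟩ => G.inv_ne h (h₂.symm.trans h₁)
  simp only [edge_eq_edge_iff]
  rw [Nat.card_congr (subtypeOrEquiv _ _ hdisj), Nat.card_sum]

theorem card_subtype_eq_ite {A : Type*} {p : A → Prop} (hp : ∀ a b, p a → p b → a = b) {q : Prop}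
    (hq : q ↔ ∀ a, ¬ p a) : Nat.card {a // p a} = if q then 0 else 1 := by
  split_ifs with h
  · have := (isEmpty_subtype _).2 (hq.1 h)
    exact Nat.card_of_isEmpty
  · obtain ⟨a, ha⟩ := not_forall_not.1 (mt hq.2 h)
    exact Nat.card_eq_one_iff_unique.2
      ⟨⟨fun b c => Subtype.ext (hp b c b.2 c.2)⟩, ⟨⟨a, ha⟩⟩⟩

theorem card_snd_eq [Finite H] (h : H) :
    Nat.card {a : G.NArrow // a.1.2 = h} = if G.IsFirst h then 0 else 1 :=
  card_subtype_eq_ite (fun _ _ ha hb => NArrow.ext_snd (ha.trans hb.symm)) isFirst_iff_forall_snd_ne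

theorem card_fst_eq [Finite H] (h : H) :
    Nat.card {a : G.NArrow // a.1.1 = h} = if G.IsLast h then 0 else 1 :=
  card_subtype_eq_ite (fun _ _ ha hb => NArrow.ext_fst (ha.trans hb.symm)) isLast_iff_forall_fst_ne

theorem card_src_eq [Finite H] (h : H) :
    Nat.card {a // G.nabla.src a = G.edge h} =
      (if G.IsFirst h then 0 else 1) + (if G.IsFirst (G.invh h) then 0 else 1) := by
  rw [← card_snd_eq, ← card_snd_eq]
  exact card_edge_eq (fun a : G.NArrow => a.1.2) h

theorem card_tgt_eq [Finite H] (h : H) :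
    Nat.card {a // G.nabla.tgt a = G.edge h} =
      (if G.IsLast h then 0 else 1) + (if G.IsLast (G.invh h) then 0 else 1) := by
  rw [← card_fst_eq, ← card_fst_eq]
  exact card_edge_eq (fun a : G.NArrow => a.1.1) h

end Edges

section Connected

theorem reflTransGen_adj_of_le [Finite H] {a b : H} (h : G.le a b) :
    Relation.ReflTransGen G.nabla.Adj (G.edge a) (G.edge b) := by
  let := G.partialOrder
  let := Fintype.ofFinite H
  let : LocallyFiniteOrder H := Fintype.toLocallyFiniteOrder
  exact (le_iff_reflTransGen_covBy.1 h).lift G.edge fun x y hxy =>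
    ⟨⟨(y, x), cov_iff_covBy.2 hxy⟩, Or.inl ⟨rfl, rfl⟩⟩

theorem reflTransGen_adj_of_z_eq [Finite H] {a b : H} (h : G.z a = G.z b) :
    Relation.ReflTransGen G.nabla.Adj (G.edge a) (G.edge b) :=
  ((G.comp_iff a b).2 h).elim reflTransGen_adj_of_le fun hba =>
    Std.Symm.symm _ _ (reflTransGen_adj_of_le hba)

theorem reflTransGen_adj [Finite H] (u v : G.E) : Relation.ReflTransGen G.nabla.Adj u v := by
  obtain ⟨a, rfl⟩ := exists_edge_eq u
  obtain ⟨b, rfl⟩ := exists_edge_eq v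
  have hconn := G.connected (G.z a) (G.z b)
  generalize hβ : G.z b = β at hconn
  induction hconn generalizing b with
  | refl => exact reflTransGen_adj_of_z_eq hβ.symm
  | tail _ hstep ih =>
    obtain ⟨h, hz, hz'⟩ := hstep
    have hreach : Relation.ReflTransGen G.nabla.Adj (G.edge a) (G.edge (G.invh h)) :=
      (edge_invh h).symm ▸ ih h hz
    exact hreach.trans (reflTransGen_adj_of_z_eq (hz'.trans hβ.symm))

end Connected

section Strands

theorem snd_eq_fst_iff {a b : G.NArrow} :
    a.1.2 = b.1.1 ↔ G.nabla.src a = G.nabla.tgt b ∧ ¬ G.nabla.rel a b := by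
  refine ⟨fun h => ⟨congrArg G.edge h, fun hrel => ?_⟩, fun ⟨hcomp, hrel⟩ => ?_⟩
  · exact G.inv_ne a.1.2 (hrel.symm.trans h.symm)
  · exact ((edge_eq_edge_iff.1 hcomp.symm).resolve_right hrel).symm

/-- A strand: a list of arrows, written from right to left, in which consecutive arrows share a
half-edge. -/
def IsStrand (G : MRG V H) (l : List G.NArrow) : Prop :=
  l.IsChain fun a b => a.1.2 = b.1.1

/-- A strand running from the first half-edge of its vertex down to the last one. The empty list is
included. -/
structure IsFullStrand (G : MRG V H) (l : List G.NArrow) : Prop where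
  isStrand : G.IsStrand l
  isFirst : ∀ a ∈ l.head?, G.IsFirst a.1.1
  isLast : ∀ a ∈ l.getLast?, G.IsLast a.1.2

theorem isStrand_iff {l : List G.NArrow} :
    G.IsStrand l ↔ G.nabla.PathChain l ∧ l.IsChain fun a b => ¬ G.nabla.rel a b := by
  change l.IsChain _ ↔ l.IsChain (fun a b => G.nabla.src a = G.nabla.tgt b) ∧ l.IsChain _
  simp only [snd_eq_fst_iff, List.isChain_iff_getElem, forall_and]

theorem IsStrand.pairwise_lt {l : List G.NArrow} (hl : G.IsStrand l) :
    l.Pairwise fun a b => G.lt b.1.1 a.1.1 := by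
  have : IsTrans G.NArrow fun a b => G.lt b.1.1 a.1.1 := ⟨fun _ _ _ hab hbc => hbc.trans hab⟩
  refine List.IsChain.pairwise (hl.imp fun a b hab => ?_)
  rw [← hab]
  exact a.2.1

theorem IsStrand.nodup {l : List G.NArrow} (hl : G.IsStrand l) : l.Nodup :=
  hl.pairwise_lt.imp fun hba => by rintro rfl; exact hba.2 rfl

theorem IsStrand.length_le [Finite H] {l : List G.NArrow} (hl : G.IsStrand l) :
    l.length ≤ Nat.card H := by
  have := Fintype.ofFinite H
  have hnodup : (l.map fun a => a.1.1).Nodup := hl.nodup.map fun _ _ => NArrow.ext_fst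
  simpa using hnodup.length_le_card

theorem IsStrand.fst_le_head {x : G.NArrow} {l : List G.NArrow} (hl : G.IsStrand (x :: l))
    {a : G.NArrow} (ha : a ∈ x :: l) : G.le a.1.1 x.1.1 := by
  rcases List.mem_cons.1 ha with rfl | ha
  · exact G.le_refl _
  · exact (List.rel_of_pairwise_cons hl.pairwise_lt ha).1

theorem IsStrand.getLast_fst_le {l : List G.NArrow} (hl : G.IsStrand l) {x a : G.NArrow}
    (hx : x ∈ l.getLast?) (ha : a ∈ l) : G.le x.1.1 a.1.1 := by
  obtain ⟨l', rfl⟩ := List.getLast?_eq_some_iff.1 hx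
  rcases List.mem_append.1 ha with ha | ha
  · exact ((List.pairwise_append.1 hl.pairwise_lt).2.2 a ha x List.mem_cons_self).1
  · rw [List.mem_singleton.1 ha]
    exact G.le_refl _

theorem IsStrand.mem_of_fst_le {x : G.NArrow} {l : List G.NArrow} (hl : G.IsStrand (x :: l))
    (hlast : ∀ b ∈ (x :: l).getLast?, G.IsLast b.1.2) {a : G.NArrow} (ha : G.le a.1.1 x.1.1) :
    a ∈ x :: l := by
  induction l generalizing x with
  | nil =>
    have hx : G.IsLast x.1.2 := hlast x rfl
    rcases NArrow.eq_or_fst_le_snd ha with rfl | hle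
    · exact List.mem_singleton_self a
    · exact absurd (G.le_antisymm hle (hx _ (z_eq_of_le hle))) (hx.fst_ne a)
  | cons y l ih =>
    obtain ⟨hxy, hl⟩ := List.isChain_cons_cons.1 hl
    rcases NArrow.eq_or_fst_le_snd ha with rfl | hle
    · exact List.mem_cons_self
    · exact List.mem_cons_of_mem x (ih hl hlast (hxy ▸ hle))

theorem exists_isStrand_cons_isLast [Finite H] (x : G.NArrow) :
    ∃ l, G.IsStrand (x :: l) ∧ ∀ a ∈ (x :: l).getLast?, G.IsLast a.1.2 := by
  let := G.partialOrder
  induction hx : x.1.1 using (wellFounded_lt (α := H)).induction generalizing x with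
  | _ h ih =>
    subst hx
    by_cases hlast : G.IsLast x.1.2
    · exact ⟨[], List.IsChain.singleton x, by rintro _ ⟨⟩; exact hlast⟩
    · obtain ⟨y, hy⟩ := not_forall_not.1 (mt isLast_iff_forall_fst_ne.2 hlast)
      obtain ⟨l, hl, hl'⟩ := ih y.1.1 (lt_iff_lt.1 (hy ▸ x.2.1)) y rfl
      exact ⟨y :: l, List.isChain_cons_cons.2 ⟨hy.symm, hl⟩, hl'⟩

end Strands

theorem isGentle_nabla [Finite H] (G : MRG V H) : G.nabla.IsGentle where
  rel_comp a b hrel := (edge_invh a.1.2).symm.trans (congrArg G.edge hrel.symm)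
  out_le v := by
    obtain ⟨h, rfl⟩ := exists_edge_eq v
    rw [card_src_eq]
    split_ifs <;> omega
  in_le v := by
    obtain ⟨h, rfl⟩ := exists_edge_eq v
    rw [card_tgt_eq]
    split_ifs <;> omega
  unique_nonrel_post b a a' hcomp hcomp' hrel hrel' :=
    NArrow.ext_snd ((snd_eq_fst_iff.2 ⟨hcomp, hrel⟩).trans (snd_eq_fst_iff.2 ⟨hcomp', hrel'⟩).symm)
  unique_nonrel_pre b c c' hcomp hcomp' hrel hrel' :=
    NArrow.ext_fst ((snd_eq_fst_iff.2 ⟨hcomp, hrel⟩).symm.trans (snd_eq_fst_iff.2 ⟨hcomp', hrel'⟩))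
  unique_rel_post _ _ _ hrel hrel' :=
    NArrow.ext_snd (G.invh_involutive.injective (hrel.symm.trans hrel'))
  unique_rel_pre _ _ _ hrel hrel' := NArrow.ext_fst (hrel.trans hrel'.symm)
  admissible := by
    refine ⟨Nat.card H + 2, by omega, fun l hlen hpath hperm => ?_⟩
    have := (isStrand_iff.2 ⟨hpath, hperm⟩).length_le
    omega
  connected := reflTransGen_adj
  has_arrow := inferInstance

section Threads

theorem isPermThread_iff_of_arrows_ne_nil [Finite H] {p : Path G.nabla} (hp : p.arrows ≠ []) :
    IsPermThread G.nabla p ↔ G.IsFullStrand p.arrows := by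
  have hstrand : G.IsStrand p.arrows ↔ p.Permitted :=
    isStrand_iff.trans (and_iff_right p.chain)
  have hfirst (b : G.NArrow) : G.IsFirst b.1.1 ↔
      ∀ a, G.nabla.src a = G.nabla.tgt b → G.nabla.rel a b := by
    simp only [isFirst_iff_forall_snd_ne, Ne, snd_eq_fst_iff, not_and, not_not]
  have hlast (b : G.NArrow) : G.IsLast b.1.2 ↔
      ∀ c, G.nabla.src b = G.nabla.tgt c → G.nabla.rel b c := by
    simp only [isLast_iff_forall_fst_ne, Ne, eq_comm (b := b.1.2), snd_eq_fst_iff, not_and, not_not]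
  refine ⟨?_, fun h => Or.inl ⟨hp, hstrand.1 h.isStrand,
    fun a b hb => (hfirst b).1 (h.isFirst b hb) a, fun b c hb => (hlast b).1 (h.isLast b hb) c⟩⟩
  rintro (⟨-, hperm, hhead, htail⟩ | ⟨hnil, -⟩)
  · exact ⟨hstrand.2 hperm, fun b hb => (hfirst b).2 fun a => hhead a b hb,
      fun b hb => (hlast b).2 fun c => htail b c hb⟩
  · exact absurd hnil hp

theorem exists_not_rel_at_edge_iff [Finite H] {h : H} :
    (∃ a b, G.nabla.src a = G.edge h ∧ G.nabla.tgt b = G.edge h ∧ ¬ G.nabla.rel a b) ↔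
      (¬ G.IsFirst h ∧ ¬ G.IsLast h) ∨ (¬ G.IsFirst (G.invh h) ∧ ¬ G.IsLast (G.invh h)) := by
  have hmid (k : H) : (¬ G.IsFirst k ∧ ¬ G.IsLast k) ↔
      ∃ a b : G.NArrow, a.1.2 = k ∧ b.1.1 = k := by
    simp only [isFirst_iff_forall_snd_ne, isLast_iff_forall_fst_ne, not_forall, not_not,
      exists_and_left, exists_and_right]
  rw [hmid, hmid]
  constructor
  · rintro ⟨a, b, ha, hb, hrel⟩
    have hab := snd_eq_fst_iff.2 ⟨ha.trans hb.symm, hrel⟩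
    exact (edge_eq_edge_iff.1 ha).imp (fun hk => ⟨a, b, hk, hab.symm.trans hk⟩)
      (fun hk => ⟨a, b, hk, hab.symm.trans hk⟩)
  · rintro (⟨a, b, ha, hb⟩ | ⟨a, b, ha, hb⟩)
    all_goals
      exact ⟨a, b, edge_eq_edge_iff.2 (by simp [ha]), edge_eq_edge_iff.2 (by simp [hb]),
        (snd_eq_fst_iff.1 (ha.trans hb.symm)).2⟩

theorem isPermThread_iff_of_arrows_eq_nil [Finite H] {p : Path G.nabla} (hp : p.arrows = []) :
    IsPermThread G.nabla p ↔ ∃ h, G.edge h = p.base ∧ G.IsFirst h ∧ G.IsLast h := by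
  obtain ⟨h, hh⟩ := exists_edge_eq p.base
  have hne : G.nabla.deg (G.edge h) ≠ 0 := deg_ne_zero_of_connected reflTransGen_adj _
  have halone : (∃ k, G.edge k = G.edge h ∧ G.IsFirst k ∧ G.IsLast k) ↔
      (G.IsFirst h ∧ G.IsLast h) ∨ (G.IsFirst (G.invh h) ∧ G.IsLast (G.invh h)) := by
    simp only [edge_eq_edge_iff, or_and_right, exists_or, exists_eq_left]
  simp only [IsPermThread, hp, ne_eq, not_true_eq_false, false_and, false_or, true_and, ← hh,
    exists_not_rel_at_edge_iff, halone]
  rw [deg, card_src_eq, card_tgt_eq] at hne ⊢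
  -- The two sides differ only if all four statements hold, which `deg ≠ 0` rules out.
  by_cases G.IsFirst h <;> by_cases G.IsLast h <;> by_cases G.IsFirst (G.invh h) <;>
    by_cases G.IsLast (G.invh h) <;> simp_all

theorem IsFullStrand.isEtaOf {p : Path G.nabla} {x : G.NArrow} {l : List G.NArrow}
    (hp : p.arrows = x :: l) (hfull : G.IsFullStrand p.arrows) : G.IsEtaOf (G.z x.1.1) p := by
  refine ⟨fun a => ?_, hfull.isStrand, hfull.isStrand.nodup, by simp [hp]⟩
  rw [hp] at hfull ⊢
  exact ⟨fun ha => z_eq_of_le (hfull.isStrand.fst_le_head ha), fun hz =>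
    hfull.isStrand.mem_of_fst_le hfull.isLast (hfull.isFirst x rfl _ hz)⟩

theorem IsEtaOf.isFullStrand [Finite H] {α : V} {p : Path G.nabla} (hp : G.IsEtaOf α p) :
    G.IsFullStrand p.arrows := by
  obtain ⟨hmem, hstrand : G.IsStrand p.arrows, -, -⟩ := hp
  refine ⟨hstrand, fun x hx => isFirst_iff_forall_snd_ne.2 fun b hb => ?_,
    fun x hx => isLast_iff_forall_fst_ne.2 fun b hb => ?_⟩
  · have hbα : b ∈ p.arrows := (hmem b).2 <|
      (b.2.z_eq.symm.trans (congrArg G.z hb)).trans ((hmem x).1 (List.mem_of_mem_head? hx))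
    obtain ⟨l, hl⟩ := List.head?_eq_some_iff.1 hx
    rw [hl] at hstrand hbα
    exact (b.2.1.trans_le (hb ▸ hstrand.fst_le_head hbα)).2 rfl
  · have hbα : b ∈ p.arrows := (hmem b).2 <|
      ((congrArg G.z hb).trans x.2.z_eq).trans ((hmem x).1 (List.mem_of_getLast? hx))
    exact (x.2.1.trans_le (hb ▸ hstrand.getLast_fst_le hx hbα)).2 rfl

theorem isEtaOf_iff_of_arrows_eq_nil [Finite H] {α : V} {p : Path G.nabla} (hp : p.arrows = []) :
    G.IsEtaOf α p ↔ ∃ h, G.z h = α ∧ G.edge h = p.base ∧ G.IsFirst h ∧ G.IsLast h := by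
  simp only [IsEtaOf, hp, List.not_mem_nil, false_iff, List.nodup_nil, true_and, forall_const]
  constructor
  · rintro ⟨hα, -, h, rfl, hbase⟩
    refine ⟨h, rfl, hbase.symm, isFirst_iff_forall_snd_ne.2 fun a ha => ?_,
      isLast_iff_forall_fst_ne.2 fun a ha => ?_⟩
    · exact hα a (a.2.z_eq.symm.trans (congrArg G.z ha))
    · exact hα a (congrArg G.z ha)
  · rintro ⟨h, rfl, hbase, hfirst, hlast⟩
    refine ⟨fun a ha => ?_, List.IsChain.nil, h, rfl, hbase.symm⟩
    exact hlast.fst_ne a (G.le_antisymm (hfirst _ ha) (hlast _ ha))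

theorem isPermThread_iff_exists_isEtaOf [Finite H] {p : Path G.nabla} :
    IsPermThread G.nabla p ↔ ∃ α, G.IsEtaOf α p := by
  by_cases hp : p.arrows = []
  · simp only [isPermThread_iff_of_arrows_eq_nil hp, isEtaOf_iff_of_arrows_eq_nil hp]
    rw [exists_comm]
    simp only [exists_eq_left']
  · rw [isPermThread_iff_of_arrows_ne_nil hp]
    obtain ⟨x, l, hxl⟩ := List.exists_cons_of_ne_nil hp
    exact ⟨fun hfull => ⟨_, hfull.isEtaOf hxl⟩, fun ⟨_, hη⟩ => hη.isFullStrand⟩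

theorem exists_isEtaOf [Finite H] (G : MRG V H) (α : V) : ∃ p, G.IsEtaOf α p := by
  obtain ⟨h, rfl, hfirst⟩ := G.exists_isFirst α
  by_cases hlast : G.IsLast h
  · let trivialPath : Path G.nabla := ⟨G.edge h, [], List.IsChain.nil, by simp⟩
    exact ⟨trivialPath, (isEtaOf_iff_of_arrows_eq_nil rfl).2 ⟨h, rfl, rfl, hfirst, hlast⟩⟩
  · obtain ⟨x, rfl⟩ := not_forall_not.1 (mt isLast_iff_forall_fst_ne.2 hlast)
    obtain ⟨l, hl, hl'⟩ := exists_isStrand_cons_isLast x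
    obtain ⟨p, hp⟩ := (isStrand_iff.1 hl).1.exists_path (List.cons_ne_nil x l)
    refine ⟨p, IsFullStrand.isEtaOf hp ?_⟩
    rw [hp]
    exact ⟨hl, by rintro _ ⟨⟩; exact hfirst, hl'⟩

end Threads

end MRG

/-- Let `(G, ≤)` be a marked ribbon graph.  Then the bound quiver
`∇(G, ≤)` is a gentle bound quiver.  Moreover, for each vertex `α` of `G` the path
`η^α` of `∇(G, ≤)` is a permitted thread of `∇(G, ≤)`, and every permitted thread of
`∇(G, ≤)` arises in this way. -/
theorem stmt4 {V H : Type} [Fintype V] [Fintype H] (G : MRG V H) :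
    (G.nabla).IsGentle ∧
    (∀ α : V, ∃ p : BQuiv.Path G.nabla, G.IsEtaOf α p ∧ IsPermThread G.nabla p) ∧
    (∀ p : BQuiv.Path G.nabla, IsPermThread G.nabla p → ∃ α : V, G.IsEtaOf α p) :=
  ⟨G.isGentle_nabla,
    fun α => (G.exists_isEtaOf α).imp fun _ hp => ⟨hp, isPermThread_iff_exists_isEtaOf.2 ⟨α, hp⟩⟩,
    fun _ => isPermThread_iff_exists_isEtaOf.1⟩
end
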